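/- arXiv:1604.01366 — 8 statements merged into one kernel-verified Lean document; each statement's English description precedes it below -/
import Mathlib

section
/- The set A = {(z,w) ∈ ℝ² : z > 0, w > 0, z + w < 1} is f-invariant: if (z,w) ∈ A then f(z,w) ∈ A. In particular, for every (z,w) ∈ A and every n ≥ 0, f^n(z,w) ∈ A. -/
open Filter Topology

/-- The restriction of the map `f(z,w) = (z(1-(z-w)), w(1+(z-w)))` to `ℝ² ⊂ ℂ²`
(`f` maps `ℝ²` into `ℝ²`). -/
noncomputable def fR : ℝ × ℝ → ℝ × ℝ :=
  fun p => (p.1 * (1 - (p.1 - p.2)), p.2 * (1 + (p.1 - p.2)))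

/-- The triangle `A = {(z,w) ∈ ℝ² : z > 0, w > 0, z + w < 1}`. -/
def A : Set (ℝ × ℝ) := {p : ℝ × ℝ | 0 < p.1 ∧ 0 < p.2 ∧ p.1 + p.2 < 1}

/-- The map `fR` sends `A` into itself. -/
theorem mapsTo_fR_A : Set.MapsTo fR A A := by
  rintro ⟨z, w⟩ ⟨hz, hw, hzw⟩
  dsimp only at hz hw hzw
  refine ⟨mul_pos hz (by linarith), mul_pos hw (by linarith), ?_⟩
  change z * (1 - (z - w)) + w * (1 + (z - w)) < 1
  nlinarith [sq_nonneg (z - w)]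

/-- `A` is `fR`-invariant, hence invariant under all iterates. -/
theorem A_invariant :
    (∀ p ∈ A, fR p ∈ A) ∧ (∀ p ∈ A, ∀ n : ℕ, fR^[n] p ∈ A) :=
  ⟨fun _ hp => mapsTo_fR_A hp, fun _ hp n => mapsTo_fR_A.iterate n hp⟩
end

section
/- Let (z,w) ∈ A and write (z_n, w_n) = f^n(z,w). If z ≤ w, then for all n ≥ 0 one has z_n ≤ w_n and z_n ≥ z. Symmetrically, if w ≤ z, then for all n ≥ 0 one has w_n ≤ z_n and w_n ≥ w. -/
open Filter Topology

theorem fR_mem_A {p : ℝ × ℝ} (hp : p ∈ A) : fR p ∈ A := by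
  obtain ⟨hz, hw, hs⟩ := hp
  refine ⟨mul_pos hz (by linarith), mul_pos hw (by linarith), ?_⟩
  simp only [fR]
  nlinarith [sq_nonneg (p.1 - p.2)]

theorem iterate_fR_mem_A {p : ℝ × ℝ} (hp : p ∈ A) (n : ℕ) : fR^[n] p ∈ A :=
  Set.MapsTo.iterate (fun _ => fR_mem_A) n hp

theorem fR_fst_sub_snd (p : ℝ × ℝ) :
    (fR p).1 - (fR p).2 = (p.1 - p.2) * (1 - (p.1 + p.2)) := by
  simp only [fR]
  ring

theorem fR_fst_le_snd {p : ℝ × ℝ} (hp : p ∈ A) (h : p.1 ≤ p.2) : (fR p).1 ≤ (fR p).2 := by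
  rw [← sub_nonpos, fR_fst_sub_snd]
  exact mul_nonpos_of_nonpos_of_nonneg (sub_nonpos.2 h) (sub_nonneg.2 hp.2.2.le)

theorem fst_le_fR_fst {p : ℝ × ℝ} (hp : p ∈ A) (h : p.1 ≤ p.2) : p.1 ≤ (fR p).1 :=
  le_mul_of_one_le_right hp.1.le (by linarith)

theorem iterate_fR_of_fst_le_snd {p : ℝ × ℝ} (hp : p ∈ A) (h : p.1 ≤ p.2) (n : ℕ) :
    (fR^[n] p).1 ≤ (fR^[n] p).2 ∧ p.1 ≤ (fR^[n] p).1 := by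
  induction n with
  | zero => exact ⟨h, le_rfl⟩
  | succ n ih =>
    have hn := iterate_fR_mem_A hp n
    rw [Function.iterate_succ_apply']
    exact ⟨fR_fst_le_snd hn ih.1, ih.2.trans (fst_le_fR_fst hn ih.1)⟩

theorem swap_semiconj_fR : Function.Semiconj Prod.swap fR fR := by
  intro p
  ext <;> simp only [fR, Prod.fst_swap, Prod.snd_swap] <;> ring

theorem swap_mem_A {p : ℝ × ℝ} (hp : p ∈ A) : p.swap ∈ A :=
  ⟨hp.2.1, hp.1, (add_comm p.2 p.1).trans_lt hp.2.2⟩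

/-- Monotonicity along orbits in `A`: if `z ≤ w` then `z_n ≤ w_n` and `z_n ≥ z` for all `n`;
symmetrically if `w ≤ z`. -/
theorem orbit_monotonicity :
    ∀ p ∈ A,
      (p.1 ≤ p.2 → ∀ n : ℕ, (fR^[n] p).1 ≤ (fR^[n] p).2 ∧ p.1 ≤ (fR^[n] p).1) ∧
      (p.2 ≤ p.1 → ∀ n : ℕ, (fR^[n] p).2 ≤ (fR^[n] p).1 ∧ p.2 ≤ (fR^[n] p).2) := by
  intro p hp
  refine ⟨iterate_fR_of_fst_le_snd hp, fun h n => ?_⟩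
  have hswap := iterate_fR_of_fst_le_snd (swap_mem_A hp) h n
  rwa [← (swap_semiconj_fR.iterate_right n).eq p] at hswap
end

section
/- For every (z,w) ∈ A, the orbit (z_n, w_n) = f^n(z,w) does not converge to (0,0). In particular, within any arbitrarily small neighborhood of the origin there are non-fixed points whose orbits remain bounded near the origin but do not converge to the origin. -/
open Filter Topology

theorem fR_fst_add_snd_le (p : ℝ × ℝ) : (fR p).1 + (fR p).2 ≤ p.1 + p.2 := by
  simp only [fR]
  nlinarith [sq_nonneg (p.1 - p.2)]

theorem iterate_fR_fst_add_snd_le (p : ℝ × ℝ) (n : ℕ) :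
    (fR^[n] p).1 + (fR^[n] p).2 ≤ p.1 + p.2 := by
  induction n with
  | zero => simp
  | succ n ih =>
    rw [Function.iterate_succ_apply']
    exact (fR_fst_add_snd_le _).trans ih

/-- On `A`, the quotient `z * w / (z + w)` does not decrease under `fR`. -/
theorem le_fst_mul_snd_fR {p : ℝ × ℝ} (hp : p ∈ A) {c : ℝ} (hc : 0 ≤ c)
    (h : c * (p.1 + p.2) ≤ p.1 * p.2) :
    c * ((fR p).1 + (fR p).2) ≤ (fR p).1 * (fR p).2 := by
  obtain ⟨hz, hw, hs⟩ := hp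
  have hd : 0 ≤ 1 - (p.1 - p.2) ^ 2 := by nlinarith
  calc c * ((fR p).1 + (fR p).2) = c * (p.1 + p.2 - (p.1 - p.2) ^ 2) := by
        simp only [fR]; ring
    _ ≤ c * ((p.1 + p.2) * (1 - (p.1 - p.2) ^ 2)) := by
        gcongr
        nlinarith [mul_nonneg (sub_nonneg.2 hs.le) (sq_nonneg (p.1 - p.2))]
    _ = c * (p.1 + p.2) * (1 - (p.1 - p.2) ^ 2) := by ring
    _ ≤ p.1 * p.2 * (1 - (p.1 - p.2) ^ 2) := by gcongr
    _ = (fR p).1 * (fR p).2 := by simp only [fR]; ring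

theorem le_fst_mul_snd_iterate_fR {p : ℝ × ℝ} (hp : p ∈ A) {c : ℝ} (hc : 0 ≤ c)
    (h : c * (p.1 + p.2) ≤ p.1 * p.2) (n : ℕ) :
    c * ((fR^[n] p).1 + (fR^[n] p).2) ≤ (fR^[n] p).1 * (fR^[n] p).2 := by
  induction n with
  | zero => simpa using h
  | succ n ih =>
    rw [Function.iterate_succ_apply']
    exact le_fst_mul_snd_fR (iterate_fR_mem_A hp n) hc ih

theorem not_tendsto_iterate_fR {p : ℝ × ℝ} (hp : p ∈ A) :
    ¬ Tendsto (fun n => fR^[n] p) atTop (𝓝 (0, 0)) := by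
  intro hlim
  have hz : 0 < p.1 := hp.1
  have hw : 0 < p.2 := hp.2.1
  set c := p.1 * p.2 / (p.1 + p.2)
  have hc0 : 0 < c := by positivity
  have h : c * (p.1 + p.2) ≤ p.1 * p.2 := (div_mul_cancel₀ _ (by positivity)).le
  have hfst : Tendsto (fun n => (fR^[n] p).1) atTop (𝓝 0) :=
    (continuous_fst.tendsto _).comp hlim
  obtain ⟨n, hn⟩ := (hfst.eventually_lt_const hc0).exists
  obtain ⟨hzn, hwn, -⟩ := iterate_fR_mem_A hp n
  nlinarith [le_fst_mul_snd_iterate_fR hp hc0.le h n]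

theorem norm_lt_of_mem_A {p : ℝ × ℝ} (hp : p ∈ A) {ε : ℝ} (h : p.1 + p.2 < ε) : ‖p‖ < ε := by
  obtain ⟨hz, hw, -⟩ := hp
  rw [Prod.norm_def, Real.norm_of_nonneg hz.le, Real.norm_of_nonneg hw.le]
  exact max_lt (by linarith) (by linarith)

/-- Orbits of points of `A` do not converge to the origin.  In particular, arbitrarily close to
the origin there are non-fixed points whose orbits stay near the origin but do not converge
to it. -/
theorem orbits_in_A_do_not_converge_to_origin :
    (∀ p ∈ A, ¬ Tendsto (fun n => fR^[n] p) atTop (𝓝 (0, 0))) ∧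
    (∀ ε : ℝ, 0 < ε → ∃ p : ℝ × ℝ, ‖p‖ < ε ∧ fR p ≠ p ∧ (∀ n : ℕ, ‖fR^[n] p‖ < ε) ∧
      ¬ Tendsto (fun n => fR^[n] p) atTop (𝓝 (0, 0))) := by
  refine ⟨fun p hp => not_tendsto_iterate_fR hp, fun ε hε => ?_⟩
  obtain ⟨δ, hδ, hδε⟩ : ∃ δ : ℝ, 0 < δ ∧ 3 * δ < min ε 1 :=
    ⟨min ε 1 / 4, by positivity, by linarith [lt_min hε one_pos]⟩
  obtain ⟨hε', h1⟩ := lt_min_iff.1 hδε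
  have hp : (δ, 2 * δ) ∈ A := ⟨hδ, by simpa using hδ, by simp only; linarith⟩
  have hs : (δ, 2 * δ).1 + (δ, 2 * δ).2 < ε := by simp only; linarith
  refine ⟨(δ, 2 * δ), norm_lt_of_mem_A hp hs, fun hfix => ?_, fun n => ?_,
    not_tendsto_iterate_fR hp⟩
  · have := congrArg Prod.fst hfix
    simp only [fR] at this
    nlinarith
  · exact norm_lt_of_mem_A (iterate_fR_mem_A hp n) ((iterate_fR_fst_add_snd_le _ n).trans_lt hs)
end

section
/- The set A is a nonempty open subset of ℝ² with (0,0) in its boundary (i.e., (0,0) ∈ closure(A) \ A), and for every (z,w) ∈ A the orbit (z_n, w_n) = f^n(z,w) converges to the real line {z = w}, that is, z_n − w_n → 0 as n → ∞. -/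
open Filter Topology

/-- The coordinate sum drops by exactly `(z - w) ^ 2` under `fR`. -/
theorem fR_fst_add_snd (p : ℝ × ℝ) :
    (fR p).1 + (fR p).2 = p.1 + p.2 - (p.1 - p.2) ^ 2 := by
  simp only [fR]
  ring

theorem isOpen_A : IsOpen A :=
  (isOpen_lt continuous_const continuous_fst).inter
    ((isOpen_lt continuous_const continuous_snd).inter
      (isOpen_lt (continuous_fst.add continuous_snd) continuous_const))

theorem zero_mem_closure_A : ((0, 0) : ℝ × ℝ) ∈ closure A := by
  have hlim : Tendsto (fun t : ℝ => (t, t)) (𝓝[>] 0) (𝓝 ((0, 0) : ℝ × ℝ)) :=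
    (Continuous.tendsto (by fun_prop : Continuous fun t : ℝ => (t, t)) 0).mono_left
      nhdsWithin_le_nhds
  refine mem_closure_of_tendsto hlim ?_
  filter_upwards [Ioo_mem_nhdsGT (show (0 : ℝ) < 1 / 2 by norm_num)] with t ht
  exact ⟨ht.1, ht.1, by linarith [ht.2]⟩

theorem tendsto_iterate_fR_fst_sub_snd {p : ℝ × ℝ} (hp : p ∈ A) :
    Tendsto (fun n => (fR^[n] p).1 - (fR^[n] p).2) atTop (𝓝 0) := by
  let s : ℕ → ℝ := fun n => (fR^[n] p).1 + (fR^[n] p).2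
  have hstep (n : ℕ) : s (n + 1) = s n - ((fR^[n] p).1 - (fR^[n] p).2) ^ 2 := by
    simp only [s, Function.iterate_succ_apply', fR_fst_add_snd]
  have hanti : Antitone s := antitone_nat_of_succ_le fun n => by
    rw [hstep]
    exact sub_le_self _ (sq_nonneg _)
  have hbdd : BddBelow (Set.range s) := ⟨0, by
    rintro _ ⟨n, rfl⟩
    obtain ⟨h1, h2, -⟩ := iterate_fR_mem_A hp n
    exact (add_pos h1 h2).le⟩
  have hs := tendsto_atTop_ciInf hanti hbdd
  have hsq : Tendsto (fun n => ((fR^[n] p).1 - (fR^[n] p).2) ^ 2) atTop (𝓝 0) := by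
    have hdiff := hs.sub (hs.comp (tendsto_add_atTop_nat 1))
    rw [sub_self] at hdiff
    refine hdiff.congr fun n => ?_
    simp only [Function.comp_apply, hstep, sub_sub_cancel]
  have habs := hsq.sqrt
  simp only [Real.sqrt_sq_eq_abs, Real.sqrt_zero] at habs
  exact (tendsto_zero_iff_abs_tendsto_zero _).2 habs

/-- `A` is a nonempty open set with the origin in its boundary, and every orbit starting in `A`
converges to the line `{z = w}`, i.e. `z_n - w_n → 0`. -/
theorem A_attracted_to_diagonal :
    A.Nonempty ∧ IsOpen A ∧ ((0, 0) : ℝ × ℝ) ∈ closure A \ A ∧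
    ∀ p ∈ A, Tendsto (fun n => (fR^[n] p).1 - (fR^[n] p).2) atTop (𝓝 0) := by
  exact ⟨⟨(1 / 4, 1 / 4), by norm_num [A]⟩, isOpen_A,
    ⟨zero_mem_closure_A, fun h => lt_irrefl _ h.1⟩, fun _ => tendsto_iterate_fR_fst_sub_snd⟩
end

section
/- Let g : ℂ² → ℂ² be g(x,y) = (x − y² + a·x^{r+1}, y − xy), where either (1) a ∈ ℂ, a ≠ 0, and r ≥ 3 is an integer, or (2) r = 2 and a ∉ {t ∈ ℝ : t ≥ 0}. Then g has a domain of attraction to the origin along the direction [1:0]: there exists a nonempty open set Ω ⊆ ℂ² with (0,0) ∈ closure(Ω) \ Ω such that for every p ∈ Ω, writing g^n(p) = (x_n, y_n), one has g^n(p) → (0,0), x_n ≠ 0 for all n, and y_n/x_n → 0 as n → ∞. -/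
open Filter Topology

/-- The second-order remainder of the binomial expansion is quadratic on the unit disc. -/
lemma exists_norm_one_add_pow_sub_le (n : ℕ) :
    ∃ C : ℝ, 0 ≤ C ∧ ∀ z : ℂ, ‖z‖ ≤ 1 → ‖(1 + z) ^ n - 1 - n * z‖ ≤ C * ‖z‖ ^ 2 := by
  induction n with
  | zero => exact ⟨0, le_rfl, fun z _ => by simp⟩
  | succ n ih =>
    obtain ⟨C, hC, h⟩ := ih
    refine ⟨2 * C + n, by positivity, fun z hz => ?_⟩
    have e : (1 + z) ^ (n + 1) - 1 - ((n + 1 : ℕ) : ℂ) * z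
        = (1 + z) * ((1 + z) ^ n - 1 - n * z) + n * z ^ 2 := by
      push_cast; ring
    have h1 : ‖1 + z‖ ≤ 2 := (norm_add_le _ _).trans (by rw [norm_one]; linarith)
    calc ‖(1 + z) ^ (n + 1) - 1 - ((n + 1 : ℕ) : ℂ) * z‖
        ≤ ‖(1 + z) * ((1 + z) ^ n - 1 - n * z)‖ + ‖(n : ℂ) * z ^ 2‖ := e ▸ norm_add_le _ _
      _ = ‖1 + z‖ * ‖(1 + z) ^ n - 1 - n * z‖ + n * ‖z‖ ^ 2 := by simp
      _ ≤ 2 * (C * ‖z‖ ^ 2) + n * ‖z‖ ^ 2 := by gcongr; exact h z hz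
      _ = (2 * C + n) * ‖z‖ ^ 2 := by ring

/-- First-order expansion of `u ^ n` around `u.re` when `u` is tangent to the real axis. -/
lemma exists_norm_pow_sub_re_le (n : ℕ) :
    ∃ C : ℝ, 0 ≤ C ∧ ∀ u : ℂ, 0 < u.re → u.re ≤ 1 → |u.im| ≤ u.re ^ 2 →
      ‖u ^ (n + 1) - ((u.re ^ (n + 1) : ℝ) + ((n + 1) * u.re ^ n * u.im : ℝ) * Complex.I)‖
        ≤ C * u.re ^ (n + 3) := by
  obtain ⟨C, hC, h⟩ := exists_norm_one_add_pow_sub_le (n + 1)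
  refine ⟨C, hC, fun u hs hs1 hv => ?_⟩
  set s := u.re
  have hs0 : (s : ℂ) ≠ 0 := by exact_mod_cast hs.ne'
  set z : ℂ := (u.im / s : ℝ) * Complex.I with hz
  have hzn : ‖z‖ ≤ s := by
    rw [hz, norm_mul, Complex.norm_I, mul_one, Complex.norm_real, Real.norm_eq_abs, abs_div,
      abs_of_pos hs, div_le_iff₀ hs]
    nlinarith
  have hu : u = s * (1 + z) := by
    conv_lhs => rw [← Complex.re_add_im u]
    rw [hz]; push_cast; field_simp; rfl
  have e : u ^ (n + 1) - ((s ^ (n + 1) : ℝ) + ((n + 1) * s ^ n * u.im : ℝ) * Complex.I)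
      = (s : ℂ) ^ (n + 1) * ((1 + z) ^ (n + 1) - 1 - ((n + 1 : ℕ) : ℂ) * z) := by
    conv_lhs => rw [show u ^ (n + 1) = (s : ℂ) ^ (n + 1) * (1 + z) ^ (n + 1) by
      rw [← mul_pow, ← hu]]
    rw [hz]; push_cast; field_simp; ring
  rw [e, norm_mul, norm_pow, Complex.norm_real, Real.norm_eq_abs, abs_of_pos hs]
  calc s ^ (n + 1) * ‖(1 + z) ^ (n + 1) - 1 - ((n + 1 : ℕ) : ℂ) * z‖
      ≤ s ^ (n + 1) * (C * ‖z‖ ^ 2) := by gcongr; exact h z (hzn.trans hs1)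
    _ ≤ s ^ (n + 1) * (C * s ^ 2) := by gcongr
    _ = C * s ^ (n + 3) := by ring

/-- A root of `a c ^ r = -1` in the right half-plane. -/
lemma exists_root_re_pos (a : ℂ) (r : ℕ)
    (h : (a ≠ 0 ∧ 3 ≤ r) ∨ (r = 2 ∧ ¬ ∃ t : ℝ, 0 ≤ t ∧ a = (t : ℂ))) :
    ∃ c : ℂ, 0 < c.re ∧ a * c ^ r = -1 := by
  have ha : a ≠ 0 := by
    rcases h with h | h
    · exact h.1
    · rintro rfl
      exact h.2 ⟨0, le_rfl, by simp⟩
  have hr : 2 ≤ r := by rcases h with h | h <;> omega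
  have hr0 : (0 : ℝ) < r := by positivity
  have hz : -1 / a ≠ 0 := div_ne_zero (by simp) ha
  set z := -1 / a with hzdef
  refine ⟨Complex.exp (Complex.log z / r), ?_, ?_⟩
  · rw [Complex.exp_re]
    refine mul_pos (Real.exp_pos _) (Real.cos_pos_of_mem_Ioo ?_)
    have him : (Complex.log z / r).im = z.arg / r := by
      rw [Complex.div_natCast_im, Complex.log_im]
    rw [him]
    have h2 : (2 : ℝ) ≤ r := by exact_mod_cast hr
    have hpi := Real.pi_pos
    constructor
    · rw [lt_div_iff₀ hr0]
      nlinarith [Complex.neg_pi_lt_arg z]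
    · rw [div_lt_iff₀ hr0]
      rcases h with h | ⟨h, hn⟩
      · have h3 : (3 : ℝ) ≤ r := by exact_mod_cast h.2
        nlinarith [Complex.arg_le_pi z]
      · have : z.arg ≠ Real.pi := by
          intro hpi
          obtain ⟨hre, him⟩ := Complex.arg_eq_pi_iff.1 hpi
          refine hn ⟨-1 / z.re, (div_pos_of_neg_of_neg (by norm_num) hre).le, ?_⟩
          have : z = (z.re : ℂ) := Complex.ext rfl (by simpa using him)
          push_cast
          rw [← this, hzdef]
          field_simp
        have := lt_of_le_of_ne (Complex.arg_le_pi z) this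
        nlinarith
  · rw [← Complex.exp_nat_mul, mul_div_cancel₀ _ (by exact_mod_cast hr0.ne'),
      Complex.exp_log hz, hzdef]
    field_simp

/-- The linear factor `1 - c u` contracts when `c` lies in the right half-plane and `u` is small
and tangent to the positive real axis. -/
lemma norm_one_sub_mul_le {c u : ℂ} (hs : 0 < u.re) (hs1 : u.re ≤ 1)
    (hv : |u.im| ≤ u.re ^ 2) (hc : (2 * ‖c‖ + 4 * ‖c‖ ^ 2) * u.re ≤ c.re) :
    ‖1 - c * u‖ ≤ 1 - c.re * u.re / 2 := by
  have hcr : c.re ≤ ‖c‖ := Complex.re_le_norm c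
  have hci : |c.im| ≤ ‖c‖ := Complex.abs_im_le_norm c
  have hsq : ‖c‖ ^ 2 = c.re ^ 2 + c.im ^ 2 := by
    rw [← Complex.normSq_eq_norm_sq, Complex.normSq_apply]; ring
  have hK : 0 ≤ ‖c‖ := norm_nonneg c
  set K := ‖c‖
  set s := u.re
  have hbv : |c.im * u.im| ≤ K * s ^ 2 := by rw [abs_mul]; gcongr
  have hv2 : u.im ^ 2 ≤ s ^ 2 := by
    rw [← sq_abs u.im]
    gcongr
    nlinarith
  have h1 : c.re * s ≤ 1 := by nlinarith [sq_nonneg (K * s - 1), sq_nonneg (K * s)]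
  refine abs_le_of_sq_le_sq' ?_ (by linarith) |>.2
  rw [← Complex.normSq_eq_norm_sq, Complex.normSq_apply]
  simp only [Complex.sub_re, Complex.one_re, Complex.mul_re, Complex.sub_im, Complex.one_im,
    Complex.mul_im]
  have e : (1 - (c.re * s - c.im * u.im)) * (1 - (c.re * s - c.im * u.im))
      + (0 - (c.re * u.im + c.im * s)) * (0 - (c.re * u.im + c.im * s))
      = 1 - 2 * c.re * s + 2 * (c.im * u.im) + K ^ 2 * (s ^ 2 + u.im ^ 2) := by
    rw [hsq]; ring
  rw [e]
  have := (abs_le.1 hbv).2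
  have h2 : K ^ 2 * (s ^ 2 + u.im ^ 2) ≤ K ^ 2 * (2 * s ^ 2) := by gcongr; linarith
  have h3 : (2 * K + 4 * K ^ 2) * s * s ≤ c.re * s := by gcongr
  nlinarith [sq_nonneg (c.re * s), sq_nonneg (K * s)]

/-- One step of the real dynamics `s ↦ s - s P + f`, `v ↦ v - N P v + f'`, with `P = s ^ r`. -/
lemma real_step {s v P N D f f' : ℝ} (hs : 0 < s) (hs1 : s ≤ 1 / 2) (hP : 0 < P)
    (hPs : P ≤ s ^ 2) (hN : 3 ≤ N) (hNs : N * s ≤ 1) (hDs : D * s ≤ 1 / 8)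
    (hv : |v| < s ^ 2) (hf : |f| ≤ D * (P * s ^ 3)) (hf' : |f'| ≤ D * (P * s ^ 3)) :
    s * (1 - 2 * s ^ 2) ≤ s - s * P + f ∧ s - s * P + f ≤ s - s * P / 2 ∧
      |v - N * P * v + f'| < (s - s * P + f) ^ 2 := by
  have hsP : 0 < s * P := by positivity
  have hs2P : 0 < s ^ 2 * P := by positivity
  have hB : D * (P * s ^ 3) ≤ s ^ 2 * P / 8 := by nlinarith
  have hB' : s ^ 2 * P / 8 ≤ s * P / 16 := by nlinarith
  obtain ⟨hf1, hf2⟩ := abs_le.1 (hf.trans hB)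
  have hNP : N * P < 1 := by nlinarith
  have hP4 : P ≤ 1 / 4 := by nlinarith
  refine ⟨by nlinarith, by linarith, ?_⟩
  have hlow : s ^ 2 * (1 - 2 * P) - s ^ 2 * P / 4 ≤ (s - s * P + f) ^ 2 := by
    have h0 : 0 ≤ s * (1 - P) - s ^ 2 * P / 8 := by nlinarith
    have h1 : (s * (1 - P) - s ^ 2 * P / 8) ^ 2 ≤ (s - s * P + f) ^ 2 := by
      gcongr; linarith
    nlinarith [sq_nonneg (s * P), sq_nonneg (s ^ 2 * P), mul_pos hs hs2P, mul_pos hsP hs2P]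
  calc |v - N * P * v + f'| ≤ |v * (1 - N * P)| + |f'| := by
        rw [show v - N * P * v = v * (1 - N * P) by ring]; exact abs_add_le _ _
    _ = |v| * (1 - N * P) + |f'| := by rw [abs_mul, abs_of_pos (by linarith : 0 < 1 - N * P)]
    _ < s ^ 2 * (1 - N * P) + s ^ 2 * P / 8 :=
        add_lt_add_of_lt_of_le (mul_lt_mul_of_pos_right hv (by linarith)) (hf'.trans hB)
    _ ≤ s ^ 2 * (1 - 2 * P) - s ^ 2 * P / 4 := by nlinarith
    _ ≤ _ := hlow

/-- The candidate domain of attraction, in the coordinates `(u, y)` with `x = c u`. -/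
def attractingRegion (r : ℕ) (δ : ℝ) : Set (ℂ × ℂ) :=
  {p | 0 < p.1.re ∧ p.1.re < δ ∧ |p.1.im| < p.1.re ^ 2 ∧ ‖p.2‖ < p.1.re ^ (r + 2)}

lemma exists_attractingRegion_step (c : ℂ) (hc : 0 < c.re) (r : ℕ) (hr : 2 ≤ r) :
    ∃ δ : ℝ, 0 < δ ∧ ∀ p ∈ attractingRegion r δ,
      (p.1 - p.1 ^ (r + 1) - p.2 ^ 2 / c, p.2 - c * p.1 * p.2) ∈ attractingRegion r δ ∧
      (p.1 - p.1 ^ (r + 1) - p.2 ^ 2 / c).re ≤ p.1.re - p.1.re ^ (r + 1) / 2 := by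
  obtain ⟨C, hC, hpow⟩ := exists_norm_pow_sub_re_le r
  have hc0 : c ≠ 0 := by rintro rfl; simp at hc
  have hcn : 0 < ‖c‖ := norm_pos_iff.2 hc0
  set D := C + 1 / ‖c‖ with hD
  have hDp : 0 < D := by positivity
  have small : ∀ A B : ℝ, 0 < B → ∀ᶠ s : ℝ in 𝓝 0, A * s ≤ B := fun A B hB => by
    have : Tendsto (fun s : ℝ => A * s) (𝓝 0) (𝓝 (A * 0)) :=
      tendsto_id.const_mul A
    rw [mul_zero] at this
    exact this.eventually_le_const hB
  have hev : ∀ᶠ s : ℝ in 𝓝 0, 1 * s ≤ 1 / 2 ∧ ((r : ℝ) + 1) * s ≤ 1 ∧ D * s ≤ 1 / 8 ∧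
      (2 * ‖c‖ + 4 * ‖c‖ ^ 2) * s ≤ c.re ∧ (2 * ((r : ℝ) + 2)) * s ≤ c.re / 2 := by
    filter_upwards [small 1 (1 / 2) (by norm_num), small (r + 1) 1 one_pos,
      small D (1 / 8) (by norm_num), small (2 * ‖c‖ + 4 * ‖c‖ ^ 2) c.re hc,
      small (2 * (r + 2)) (c.re / 2) (half_pos hc)] with s h1 h2 h3 h4 h5
    exact ⟨h1, h2, h3, h4, h5⟩
  obtain ⟨δ, ⟨hδ1, hδ2, hδ3, hδ4, hδ5⟩, hδ⟩ :=
    ((hev.filter_mono (nhdsWithin_le_nhds (s := Set.Ioi 0))).and self_mem_nhdsWithin).exists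
  refine ⟨δ, hδ, ?_⟩
  rintro ⟨u, y⟩ ⟨hs, hsδ, hv, hy⟩
  simp only at hs hsδ hv hy ⊢
  have hs1 : u.re ≤ 1 / 2 := by linarith
  have mono : ∀ A B : ℝ, 0 ≤ A → A * δ ≤ B → A * u.re ≤ B := fun A B hA h =>
    (mul_le_mul_of_nonneg_left hsδ.le hA).trans h
  set E := u ^ (r + 1) - ((u.re ^ (r + 1) : ℝ) + ((r + 1) * u.re ^ r * u.im : ℝ) * Complex.I)
    with hE
  have hEn : ‖E‖ ≤ C * u.re ^ (r + 3) := hpow u hs (by linarith) hv.le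
  have hyn : ‖y ^ 2 / c‖ ≤ 1 / ‖c‖ * u.re ^ (r + 3) := by
    rw [norm_div, norm_pow, div_eq_mul_one_div, mul_comm]
    gcongr
    calc ‖y‖ ^ 2 ≤ (u.re ^ (r + 2)) ^ 2 := by gcongr
      _ = u.re ^ ((r + 2) * 2) := (pow_mul _ _ _).symm
      _ ≤ u.re ^ (r + 3) := pow_le_pow_of_le_one hs.le (by linarith) (by omega)
  set F := -E - y ^ 2 / c with hF
  have hFn : ‖F‖ ≤ D * (u.re ^ r * u.re ^ 3) := by
    calc ‖F‖ ≤ ‖E‖ + ‖y ^ 2 / c‖ := by rw [← norm_neg E]; exact norm_sub_le _ _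
      _ ≤ D * (u.re ^ r * u.re ^ 3) := by rw [hD, ← pow_add]; linarith
  have hu' : u - u ^ (r + 1) - y ^ 2 / c
      = u - ((u.re * u.re ^ r : ℝ) + ((r + 1) * u.re ^ r * u.im : ℝ) * Complex.I) + F := by
    rw [hF, hE, ← pow_succ']; ring
  have hre : (u - u ^ (r + 1) - y ^ 2 / c).re = u.re - u.re * u.re ^ r + F.re := by
    rw [hu']
    simp only [Complex.add_re, Complex.sub_re, Complex.ofReal_re, Complex.re_ofReal_mul,
      Complex.I_re, mul_zero, add_zero]
  have him : (u - u ^ (r + 1) - y ^ 2 / c).im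
      = u.im - (r + 1) * u.re ^ r * u.im + F.im := by
    rw [hu']
    simp only [Complex.add_im, Complex.sub_im, Complex.ofReal_im, Complex.im_ofReal_mul,
      Complex.I_im, mul_one, zero_add]
  have hr' : (2 : ℝ) ≤ r := by exact_mod_cast hr
  obtain ⟨hlow, hup, hang⟩ := real_step hs hs1 (pow_pos hs r)
    (pow_le_pow_of_le_one hs.le (by linarith) hr) (by linarith : (3 : ℝ) ≤ r + 1)
    (mono _ _ (by positivity) hδ2) (mono _ _ hDp.le hδ3) hv
    ((Complex.abs_re_le_norm F).trans hFn) ((Complex.abs_im_le_norm F).trans hFn)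
  have hfac : 0 < 1 - 2 * u.re ^ 2 := by nlinarith
  have hsP : 0 < u.re * u.re ^ r := by positivity
  refine ⟨⟨?_, ?_, ?_, ?_⟩, ?_⟩
  · simp only [hre]; exact (mul_pos hs hfac).trans_le hlow
  · simp only [hre]; linarith
  · simp only [hre, him]; exact hang
  · simp only [hre]
    have hcon := norm_one_sub_mul_le (c := c) hs (by linarith) hv.le
      (mono _ _ (by positivity) hδ4)
    have hbern : 1 - c.re * u.re / 2 ≤ (1 - 2 * u.re ^ 2) ^ (r + 2) := by
      have h1 := one_add_mul_le_pow (a := -(2 * u.re ^ 2)) (by linarith) (r + 2)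
      have h2 := mono _ _ (by positivity) hδ5
      rw [← sub_eq_add_neg] at h1
      refine le_trans ?_ h1
      push_cast
      nlinarith
    calc ‖y - c * u * y‖ = ‖y‖ * ‖1 - c * u‖ := by rw [← norm_mul]; ring_nf
      _ ≤ ‖y‖ * (1 - 2 * u.re ^ 2) ^ (r + 2) := by gcongr; exact hcon.trans hbern
      _ < u.re ^ (r + 2) * (1 - 2 * u.re ^ 2) ^ (r + 2) := by gcongr
      _ = (u.re * (1 - 2 * u.re ^ 2)) ^ (r + 2) := (mul_pow _ _ _).symm
      _ ≤ _ := by gcongr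
  · rw [hre, pow_succ']; exact hup

lemma isOpen_attractingRegion (r : ℕ) (δ : ℝ) : IsOpen (attractingRegion r δ) := by
  have hre : Continuous fun p : ℂ × ℂ => p.1.re := by fun_prop
  have him : Continuous fun p : ℂ × ℂ => |p.1.im| := by fun_prop
  exact (isOpen_lt continuous_const hre).inter ((isOpen_lt hre continuous_const).inter
    ((isOpen_lt him (hre.pow 2)).inter (isOpen_lt continuous_snd.norm (hre.pow _))))

/-- A positive sequence with `s (n + 1) ≤ s n - s n ^ m / 2` tends to zero. -/
lemma tendsto_zero_of_le_sub_pow {s : ℕ → ℝ} {m : ℕ} (hm : m ≠ 0) (hpos : ∀ n, 0 < s n)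
    (hstep : ∀ n, s (n + 1) ≤ s n - s n ^ m / 2) : Tendsto s atTop (𝓝 0) := by
  have hanti : Antitone s := antitone_nat_of_succ_le fun n =>
    (hstep n).trans (by have := pow_pos (hpos n) m; linarith)
  have hlim := tendsto_atTop_ciInf hanti ⟨0, by rintro _ ⟨n, rfl⟩; exact (hpos n).le⟩
  set L := ⨅ n, s n
  have hL : 0 ≤ L := ge_of_tendsto' hlim fun n => (hpos n).le
  have hle : L ≤ L - L ^ m / 2 :=
    le_of_tendsto_of_tendsto' (hlim.comp (tendsto_add_atTop_nat 1))
      (hlim.sub ((hlim.pow m).div_const 2)) hstep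
  have hL0 : L = 0 := by
    have h1 : L ^ m = 0 := le_antisymm (by linarith) (pow_nonneg hL m)
    exact (pow_eq_zero_iff hm).1 h1
  rwa [hL0] at hlim

/-- For `g(x,y) = (x - y² + a x^{r+1}, y - xy)` with either `a ≠ 0` and `r ≥ 3`, or `r = 2` and
`a` not a nonnegative real, there is a domain of attraction to the origin along `[1:0]`. -/
theorem g_has_domain_of_attraction (a : ℂ) (r : ℕ)
    (h : (a ≠ 0 ∧ 3 ≤ r) ∨ (r = 2 ∧ ¬ ∃ t : ℝ, 0 ≤ t ∧ a = (t : ℂ))) :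
    ∃ Ω : Set (ℂ × ℂ), Ω.Nonempty ∧ IsOpen Ω ∧ ((0, 0) : ℂ × ℂ) ∈ closure Ω \ Ω ∧
      ∀ p ∈ Ω,
        Tendsto
          (fun n => (fun q : ℂ × ℂ => (q.1 - q.2 ^ 2 + a * q.1 ^ (r + 1), q.2 - q.1 * q.2))^[n] p)
          atTop (𝓝 (0, 0)) ∧
        (∀ n : ℕ,
          ((fun q : ℂ × ℂ => (q.1 - q.2 ^ 2 + a * q.1 ^ (r + 1), q.2 - q.1 * q.2))^[n] p).1 ≠ 0) ∧
        Tendsto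
          (fun n =>
            ((fun q : ℂ × ℂ => (q.1 - q.2 ^ 2 + a * q.1 ^ (r + 1), q.2 - q.1 * q.2))^[n] p).2 /
            ((fun q : ℂ × ℂ => (q.1 - q.2 ^ 2 + a * q.1 ^ (r + 1), q.2 - q.1 * q.2))^[n] p).1)
          atTop (𝓝 0) := by
  have hr : 2 ≤ r := by rcases h with h | h <;> omega
  obtain ⟨c, hc, hac⟩ := exists_root_re_pos a r h
  have hc0 : c ≠ 0 := by rintro rfl; simp at hc
  obtain ⟨δ, hδ, hstep⟩ := exists_attractingRegion_step c hc r hr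
  set g : ℂ × ℂ → ℂ × ℂ :=
    fun q => (q.1 - q.2 ^ 2 + a * q.1 ^ (r + 1), q.2 - q.1 * q.2) with hg
  set S : ℂ × ℂ → ℂ × ℂ := fun p => (p.1 / c, p.2) with hS
  have hScont : Continuous S := by fun_prop
  have hconj : ∀ p, S (g p)
      = ((S p).1 - (S p).1 ^ (r + 1) - (S p).2 ^ 2 / c, (S p).2 - c * (S p).1 * (S p).2) := by
    rintro ⟨x, y⟩
    have ha : a = -1 / c ^ r := by rw [← hac]; field_simp
    simp only [hS, hg, ha, Prod.mk.injEq]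
    constructor
    · rw [div_pow]; field_simp; ring
    · field_simp
  have hpt : ∀ t : ℝ, 0 < t → t < δ → (c * t, (0 : ℂ)) ∈ S ⁻¹' attractingRegion r δ := by
    intro t ht htδ
    have e : S (c * t, 0) = ((t : ℂ), 0) := by simp [hS, hc0]
    rw [Set.mem_preimage, e]
    exact ⟨by simpa using ht, by simpa using htδ, by simpa using pow_pos ht 2,
      by simpa using pow_pos ht _⟩
  refine ⟨S ⁻¹' attractingRegion r δ, ⟨_, hpt (δ / 2) (by linarith) (by linarith)⟩,
    (isOpen_attractingRegion r δ).preimage hScont, ⟨?_, ?_⟩, ?_⟩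
  · have hlim : Tendsto (fun t : ℝ => (c * t, (0 : ℂ))) (𝓝[>] 0) (𝓝 (0, 0)) := by
      have : Continuous fun t : ℝ => (c * t, (0 : ℂ)) := by fun_prop
      simpa using (this.tendsto 0).mono_left nhdsWithin_le_nhds
    refine mem_closure_of_tendsto hlim ?_
    filter_upwards [Ioo_mem_nhdsGT hδ] with t ht
    exact hpt t ht.1 ht.2
  · rintro ⟨h0, -⟩
    simp [hS] at h0
  · intro p hp
    have hmem : ∀ n, S (g^[n] p) ∈ attractingRegion r δ := by
      intro n
      induction n with
      | zero => exact hp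
      | succ n ih =>
        rw [Function.iterate_succ_apply', hconj]
        exact (hstep _ ih).1
    have hs0 : Tendsto (fun n => (S (g^[n] p)).1.re) atTop (𝓝 0) := by
      refine tendsto_zero_of_le_sub_pow (Nat.succ_ne_zero r) (fun n => (hmem n).1) fun n => ?_
      rw [Function.iterate_succ_apply', hconj]
      exact (hstep _ (hmem n)).2
    have hpow0 : ∀ m : ℕ, m ≠ 0 →
        Tendsto (fun n => (S (g^[n] p)).1.re ^ m) atTop (𝓝 0) := fun m hm => by
      simpa [hm] using hs0.pow m
    have hx : ∀ n, (g^[n] p).1 = c * (S (g^[n] p)).1 := fun n => by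
      simp only [hS]; field_simp
    have hu0 : Tendsto (fun n => (S (g^[n] p)).1) atTop (𝓝 0) := by
      refine squeeze_zero_norm (fun n => ?_) (by simpa using hs0.add (hpow0 2 two_ne_zero))
      refine (Complex.norm_le_abs_re_add_abs_im _).trans ?_
      rw [abs_of_pos (hmem n).1]
      gcongr
      exact (hmem n).2.2.1.le
    refine ⟨?_, fun n hn => ?_, ?_⟩
    · refine Tendsto.prodMk_nhds ?_ ?_
      · simp_rw [hx]
        simpa using hu0.const_mul c
      · exact squeeze_zero_norm (fun n => (hmem n).2.2.2.le) (hpow0 (r + 2) (by omega))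
    · have := (hmem n).1
      simp [hS, hn] at this
    · refine squeeze_zero_norm (fun n => ?_)
        (by simpa using (hpow0 (r + 1) (by omega)).const_mul (1 / ‖c‖))
      have hsn := (hmem n).1
      rw [norm_div, hx n, norm_mul, div_le_iff₀
        (mul_pos (norm_pos_iff.2 hc0) (hsn.trans_le (Complex.re_le_norm _)))]
      calc ‖(g^[n] p).2‖ ≤ (S (g^[n] p)).1.re ^ (r + 2) := (hmem n).2.2.2.le
        _ = (S (g^[n] p)).1.re ^ (r + 1) * (S (g^[n] p)).1.re := pow_succ _ _
        _ ≤ (S (g^[n] p)).1.re ^ (r + 1) * ‖(S (g^[n] p)).1‖ := by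
          gcongr; exact Complex.re_le_norm _
        _ = _ := by
          have := norm_ne_zero_iff.2 hc0
          field_simp
end

section
/- Let r ≥ 3 be an integer, a ∈ ℂ with a ≠ 0 (or r = 2 and a ∉ {t ∈ ℝ : t ≥ 0}), and let G(x,y) = (x − y² + a·x^{r+1} + η₁(x,y), y − xy + η₂(x,y)), where η₁, η₂ are holomorphic near the origin of ℂ² and satisfy |η_i(x,y)| ≤ C(|y|·‖(x,y)‖² + |x|^{r+2}) for some constant C > 0 on a neighborhood of the origin. Then G has a domain of attraction to the origin along [1:0]: there exists a nonempty open set Ω ⊆ ℂ² with (0,0) ∈ closure(Ω) \ Ω such that for every p ∈ Ω, writing G^n(p) = (x_n, y_n), one has G^n(p) → (0,0), x_n ≠ 0 for all n, and y_n/x_n → 0 as n → ∞. -/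
open Filter Topology

/-- An attracting direction of `x ↦ x + a x ^ (r + 1)` lying in the open right half-plane. -/
theorem exists_attracting_direction_re_pos {a : ℂ} {r : ℕ} (ha : a ≠ 0)
    (h : 3 ≤ r ∨ (r = 2 ∧ ¬ ∃ t : ℝ, 0 ≤ t ∧ a = (t : ℂ))) :
    ∃ v : ℂ, ‖v‖ = 1 ∧ 0 < v.re ∧ a * v ^ r = -(‖a‖ : ℂ) := by
  have hr : 2 ≤ r := by omega
  have hr0 : (r : ℝ) ≠ 0 := by positivity
  set φ : ℝ := (-a⁻¹).arg with hφ
  refine ⟨Complex.exp ((φ / r : ℝ) * Complex.I), Complex.norm_exp_ofReal_mul_I _, ?_, ?_⟩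
  · rw [Complex.exp_ofReal_mul_I_re]
    have hle : |φ| ≤ Real.pi := Complex.abs_arg_le_pi _
    have hpi := Real.pi_pos
    have hlt : |φ / r| < Real.pi / 2 := by
      rw [abs_div, Nat.abs_cast, div_lt_iff₀ (by positivity)]
      rcases h with h3 | ⟨h2, hnot⟩
      · have h3' : (3 : ℝ) ≤ r := by exact_mod_cast h3
        nlinarith
      · have hne : φ ≠ Real.pi := by
          intro hEq
          obtain ⟨hre, him⟩ := Complex.arg_eq_pi_iff.1 hEq
          have hb : a⁻¹ = ((a⁻¹.re : ℝ) : ℂ) := by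
            apply Complex.ext
            · simp
            · simpa using him
          refine hnot ⟨(a⁻¹.re)⁻¹, ?_, ?_⟩
          · have hpos : 0 < a⁻¹.re := by simpa using hre
            positivity
          · rw [Complex.ofReal_inv, ← hb, inv_inv]
        have hne' : -Real.pi < φ := Complex.neg_pi_lt_arg _
        have hlt' : |φ| < Real.pi :=
          abs_lt.2 ⟨hne', lt_of_le_of_ne (Complex.arg_le_pi _) hne⟩
        subst h2
        push_cast
        linarith
    rw [abs_lt] at hlt
    exact Real.cos_pos_of_mem_Ioo ⟨by linarith, by linarith⟩
  · rw [← Complex.exp_nat_mul]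
    have hmul : (r : ℂ) * ((φ / r : ℝ) * Complex.I) = φ * Complex.I := by
      have : (r : ℂ) ≠ 0 := by exact_mod_cast hr0
      push_cast
      field_simp
    have hpolar := Complex.norm_mul_exp_arg_mul_I (-a⁻¹)
    rw [← hφ, norm_neg, norm_inv] at hpolar
    have hna : (‖a‖ : ℂ) ≠ 0 := by simpa using ha
    rw [hmul]
    push_cast at hpolar
    field_simp at hpolar
    linear_combination hpolar

/-- A sequence of nonnegative reals contracted at each step by `exp (-κ d ^ r)` tends to `0`. -/
theorem tendsto_zero_of_le_mul_exp_neg_pow {d : ℕ → ℝ} {κ : ℝ} {r : ℕ} (hκ : 0 < κ)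
    (hd : ∀ n, 0 ≤ d n) (hstep : ∀ n, d (n + 1) ≤ d n * Real.exp (-(κ * d n ^ r))) :
    Tendsto d atTop (𝓝 0) := by
  have hanti : Antitone d := antitone_nat_of_succ_le fun n =>
    (hstep n).trans <| mul_le_of_le_one_right (hd n) <| Real.exp_le_one_iff.2 <|
      neg_nonpos.2 <| mul_nonneg hκ.le <| pow_nonneg (hd n) r
  have hbdd : BddBelow (Set.range d) := ⟨0, by rintro _ ⟨n, rfl⟩; exact hd n⟩
  have hlim := tendsto_atTop_ciInf hanti hbdd
  set L := ⨅ n, d n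
  have hL : 0 ≤ L := ge_of_tendsto' hlim hd
  have hle : L ≤ L * Real.exp (-(κ * L ^ r)) := by
    refine le_of_tendsto_of_tendsto' (hlim.comp (tendsto_add_atTop_nat 1)) ?_ hstep
    exact hlim.mul ((Real.continuous_exp.tendsto _).comp ((hlim.pow r).const_mul κ).neg)
  rcases hL.eq_or_lt with h0 | h0
  · rwa [← h0] at hlim
  · have hexp : Real.exp (-(κ * L ^ r)) < 1 := Real.exp_lt_one_iff.2 (by
      have : 0 < κ * L ^ r := by positivity
      linarith)
    nlinarith

/-- The map `θ ↦ θ - A sin (r θ)` pushes small angles towards `0`, up to an error `e`. -/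
theorem abs_sub_mul_sin_add_lt {θ ω A e β r : ℝ} (hr : 0 < r) (hA : 0 < A)
    (hθ : |θ| < β) (hrβ : r * β ≤ 1) (hAr : A * r ≤ 1) (he : e ≤ A * r * β / 2)
    (hω : |ω + A * Real.sin (r * θ)| ≤ e) : |θ + ω| < β := by
  have hcontr : |θ - A * Real.sin (r * θ)| ≤ |θ| * (1 - A * r / 2) := by
    wlog h0 : 0 ≤ θ generalizing θ ω
    · have := @this (-θ) (-ω) (by rwa [abs_neg]) (by
        rw [mul_neg, Real.sin_neg, ← abs_neg]; convert hω using 2; ring) (by linarith)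
      rw [mul_neg, Real.sin_neg, abs_neg] at this
      rw [← abs_neg]
      convert this using 2
      ring
    rw [abs_of_nonneg h0] at hθ ⊢
    have hu0 : 0 ≤ r * θ := by positivity
    have hu1 : r * θ ≤ 1 := by nlinarith
    have hs1 : Real.sin (r * θ) ≤ r * θ := Real.sin_le hu0
    have hs2 : r * θ / 2 ≤ Real.sin (r * θ) := by
      have := Real.mul_le_sin hu0 (by linarith [Real.pi_gt_three])
      have hpi : (1 : ℝ) / 2 ≤ 2 / Real.pi := by
        rw [div_le_div_iff₀ (by norm_num) Real.pi_pos]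
        linarith [Real.pi_le_four]
      nlinarith
    rw [abs_of_nonneg]
    · nlinarith
    · nlinarith [mul_le_mul_of_nonneg_left hs1 hA.le]
  have htri : |θ + ω| ≤ |θ - A * Real.sin (r * θ)| + |ω + A * Real.sin (r * θ)| := by
    refine le_trans (le_of_eq ?_) (abs_add_le _ _)
    congr 1
    ring
  have hpos : 0 < 1 - A * r / 2 := by linarith
  nlinarith [mul_lt_mul_of_pos_right hθ hpos]

theorem norm_one_sub_le_of_re_ge {x : ℂ} {c : ℝ} (hc : 2 * c * ‖x‖ ≤ x.re) (hx : ‖x‖ ≤ 2 * c)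
    (hx1 : c * ‖x‖ ≤ 1) : ‖1 - x‖ ≤ 1 - c * ‖x‖ := by
  refine abs_le_of_sq_le_sq' ?_ (by linarith) |>.2
  have h1 := Complex.sq_norm (1 - x)
  have h2 := Complex.sq_norm x
  rw [Complex.normSq_apply] at h1 h2
  simp only [Complex.sub_re, Complex.sub_im, Complex.one_re, Complex.one_im] at h1
  nlinarith [mul_le_mul_of_nonneg_left hx (norm_nonneg x), sq_nonneg (c * ‖x‖)]

theorem eq_mul_mul_conj_of_norm_eq_one {v : ℂ} (hv : ‖v‖ = 1) (x : ℂ) :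
    x = v * (x * (starRingEnd ℂ) v) := by
  have : v * (starRingEnd ℂ) v = 1 := by
    rw [Complex.mul_conj, Complex.normSq_eq_norm_sq, hv]
    simp
  linear_combination -x * this

/-- Points making a small angle with a direction `v` in the right half-plane stay away from the
imaginary axis. -/
theorem re_ge_of_abs_arg_mul_conj_le {v x : ℂ} (hv : ‖v‖ = 1) {β : ℝ}
    (hx : |(x * (starRingEnd ℂ) v).arg| ≤ β) : (v.re - β) * ‖x‖ ≤ x.re := by
  set t := x * (starRingEnd ℂ) v with ht
  have hxt : x = v * t := eq_mul_mul_conj_of_norm_eq_one hv x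
  have hn : ‖t‖ = ‖x‖ := by simp [ht, hv]
  have hpol := Complex.norm_mul_exp_arg_mul_I t
  have hdecomp : x = ‖x‖ * v + ‖x‖ * v * (Complex.exp (Complex.I * t.arg) - 1) := by
    conv_lhs => rw [hxt, ← hpol, hn]
    rw [mul_comm Complex.I]
    ring
  have herr : ‖(‖x‖ : ℂ) * v * (Complex.exp (Complex.I * t.arg) - 1)‖ ≤ ‖x‖ * β := by
    rw [norm_mul, norm_mul, hv, Complex.norm_real, norm_norm, mul_one]
    gcongr
    refine (Real.norm_exp_I_mul_ofReal_sub_one_le).trans ?_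
    simpa using hx
  have hre : x.re = ‖x‖ * v.re + ((‖x‖ : ℂ) * v * (Complex.exp (Complex.I * t.arg) - 1)).re := by
    conv_lhs => rw [hdecomp]
    rw [Complex.add_re, Complex.re_ofReal_mul]
  have := neg_le_of_abs_le ((Complex.abs_re_le_norm _).trans herr)
  rw [hre]
  linarith


/-- Logarithm of the multiplier `1 + a x ^ r + e` in polar coordinates around an attracting
direction `v`. -/
theorem norm_log_multiplier_add_le {a v x e : ℂ} {r : ℕ} {B : ℝ} (hr : 1 ≤ r) (hB : 0 ≤ B)
    (hv : ‖v‖ = 1) (hav : a * v ^ r = -(‖a‖ : ℂ)) (hx1 : ‖x‖ ≤ 1)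
    (hK : (‖a‖ + B) * ‖x‖ ≤ 1 / 2) (he : ‖e‖ ≤ B * ‖x‖ ^ (r + 1)) :
    ‖a * x ^ r + e‖ ≤ (‖a‖ + B) * ‖x‖ ^ r ∧
    ‖Complex.log (1 + (a * x ^ r + e)) +
      ((‖a‖ * ‖x‖ ^ r : ℝ) : ℂ) *
        Complex.exp ((r * (x * (starRingEnd ℂ) v).arg : ℝ) * Complex.I)‖
      ≤ (B + (‖a‖ + B) ^ 2) * ‖x‖ * ‖x‖ ^ r := by
  have hd0 := norm_nonneg x
  have hDd : ‖x‖ ^ r ≤ ‖x‖ := pow_le_of_le_one hd0 hx1 (by omega)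
  have hD0 : 0 ≤ ‖x‖ ^ r := by positivity
  have hz : ‖a * x ^ r + e‖ ≤ (‖a‖ + B) * ‖x‖ ^ r := by
    refine (norm_add_le _ _).trans ?_
    rw [norm_mul, norm_pow]
    have : B * ‖x‖ ^ (r + 1) ≤ B * ‖x‖ ^ r := by
      gcongr B * ?_
      exact pow_le_pow_of_le_one hd0 hx1 (by omega)
    linarith
  refine ⟨hz, ?_⟩
  set z := a * x ^ r + e with hzdef
  have hz2 : ‖z‖ ≤ 1 / 2 := hz.trans (le_trans (by gcongr) hK)
  set t := x * (starRingEnd ℂ) v with ht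
  have hxt : x = v * t := eq_mul_mul_conj_of_norm_eq_one hv x
  have hn : ‖t‖ = ‖x‖ := by simp [ht, hv]
  have hpol : a * x ^ r =
      -(((‖a‖ * ‖x‖ ^ r : ℝ) : ℂ) * Complex.exp ((r * t.arg : ℝ) * Complex.I)) := by
    have h1 : t ^ r = (‖x‖ : ℂ) ^ r * Complex.exp ((r * t.arg : ℝ) * Complex.I) := by
      conv_lhs => rw [← Complex.norm_mul_exp_arg_mul_I t, hn, mul_pow, ← Complex.exp_nat_mul]
      push_cast
      ring_nf
    conv_lhs => rw [hxt, mul_pow, ← mul_assoc, hav, h1]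
    push_cast
    ring
  have hlog : ‖Complex.log (1 + z) - z‖ ≤ ‖z‖ ^ 2 := by
    refine (Complex.norm_log_one_add_sub_self_le (by linarith)).trans ?_
    have : (1 - ‖z‖)⁻¹ ≤ 2 := by
      rw [inv_le_comm₀ (by linarith) (by norm_num)]
      linarith
    nlinarith [sq_nonneg ‖z‖]
  have hsplit : Complex.log (1 + z) + ((‖a‖ * ‖x‖ ^ r : ℝ) : ℂ) *
      Complex.exp ((r * t.arg : ℝ) * Complex.I) = (Complex.log (1 + z) - z) + e := by
    rw [hzdef, hpol]
    ring
  rw [hsplit]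
  refine (norm_add_le _ _).trans ?_
  have hzsq : ‖z‖ ^ 2 ≤ (‖a‖ + B) ^ 2 * (‖x‖ * ‖x‖ ^ r) := by
    calc ‖z‖ ^ 2 ≤ ((‖a‖ + B) * ‖x‖ ^ r) ^ 2 := by gcongr
      _ = (‖a‖ + B) ^ 2 * (‖x‖ ^ r * ‖x‖ ^ r) := by ring
      _ ≤ (‖a‖ + B) ^ 2 * (‖x‖ * ‖x‖ ^ r) := by gcongr
  rw [pow_succ] at he
  linarith

/-- One step `x ↦ x (1 + a x ^ r + e)` in a small sector around an attracting direction: the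
modulus decreases at a definite rate, but not too fast, and the sector is preserved. -/
theorem sector_step {a v x e : ℂ} {r : ℕ} {B β : ℝ} (hr : 1 ≤ r) (hB : 0 ≤ B)
    (ha : a ≠ 0) (hx : x ≠ 0)
    (hv : ‖v‖ = 1) (hav : a * v ^ r = -(‖a‖ : ℂ)) (hx1 : ‖x‖ ≤ 1)
    (hK : (‖a‖ + B) * ‖x‖ ≤ 1 / 2) (he : ‖e‖ ≤ B * ‖x‖ ^ (r + 1))
    (hrβ : r * β ≤ 1) (hβ : |(x * (starRingEnd ℂ) v).arg| < β)
    (har : ‖a‖ * r * ‖x‖ ≤ 1)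
    (hEβ : (B + (‖a‖ + B) ^ 2) * ‖x‖ ≤ ‖a‖ * r * β / 2)
    (hE : (B + (‖a‖ + B) ^ 2) * ‖x‖ ≤ ‖a‖ / 4) :
    x * (1 + (a * x ^ r + e)) ≠ 0 ∧
    |(x * (1 + (a * x ^ r + e)) * (starRingEnd ℂ) v).arg| < β ∧
    ‖x * (1 + (a * x ^ r + e))‖ ≤ ‖x‖ * Real.exp (-(‖a‖ / 4 * ‖x‖ ^ r)) ∧
    ‖x‖ ^ r * (1 - r * ((‖a‖ + B) * ‖x‖ ^ r)) ≤ ‖x * (1 + (a * x ^ r + e))‖ ^ r := by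
  obtain ⟨hz, hlog⟩ := norm_log_multiplier_add_le hr hB hv hav hx1 hK he
  set z := a * x ^ r + e
  set t := x * (starRingEnd ℂ) v with ht
  have hd : 0 < ‖x‖ := norm_pos_iff.2 hx
  have hα : 0 < ‖a‖ := norm_pos_iff.2 ha
  have hr' : (1 : ℝ) ≤ r := by exact_mod_cast hr
  have hDd : ‖x‖ ^ r ≤ ‖x‖ := pow_le_of_le_one hd.le hx1 (by omega)
  have hD : 0 < ‖x‖ ^ r := by positivity
  have hz2 : ‖z‖ ≤ 1 / 2 := hz.trans (le_trans (by gcongr) hK)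
  have hm0 : 1 + z ≠ 0 := by
    intro h0
    have : z = -1 := by linear_combination h0
    rw [this] at hz2
    norm_num at hz2
  have ht0 : t ≠ 0 := by
    rw [← norm_pos_iff, ht, norm_mul, RCLike.norm_conj, hv, mul_one]
    exact hd
  have him := (Complex.abs_im_le_norm _).trans hlog
  have hre := (le_abs_self _).trans ((Complex.abs_re_le_norm _).trans hlog)
  rw [Complex.add_im, Complex.im_ofReal_mul, Complex.log_im, Complex.exp_ofReal_mul_I_im] at him
  rw [Complex.add_re, Complex.re_ofReal_mul, Complex.log_re, Complex.exp_ofReal_mul_I_re] at hre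
  have hβ0 : 0 < β := (abs_nonneg _).trans_lt hβ
  have hβ1 : β ≤ 1 := by nlinarith
  have hsum : |t.arg + (1 + z).arg| < β := by
    refine abs_sub_mul_sin_add_lt (r := r) (by linarith) (A := ‖a‖ * ‖x‖ ^ r) (by positivity) hβ
      hrβ ?_ ?_ him
    · have : ‖a‖ * r * ‖x‖ ^ r ≤ ‖a‖ * r * ‖x‖ := by gcongr
      linarith
    · nlinarith [mul_le_mul_of_nonneg_right hEβ hD.le]
  refine ⟨mul_ne_zero hx hm0, ?_, ?_, ?_⟩
  · have hmul : x * (1 + z) * (starRingEnd ℂ) v = t * (1 + z) := by rw [ht]; ring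
    have hpi := Real.pi_gt_three
    obtain ⟨h1, h2⟩ := abs_lt.1 hsum
    rw [hmul, Complex.arg_mul ht0 hm0 ⟨by linarith, by linarith⟩]
    exact hsum
  · rw [norm_mul]
    gcongr
    rw [← Real.log_le_iff_le_exp (norm_pos_iff.2 hm0)]
    have hrt : |r * t.arg| ≤ 1 := by
      rw [abs_mul, Nat.abs_cast]
      nlinarith
    have hcos : 1 / 2 ≤ Real.cos (r * t.arg) := by
      have := Real.one_sub_sq_div_two_le_cos (x := r * t.arg)
      have hsq : (r * t.arg) ^ 2 ≤ 1 := (sq_le_one_iff_abs_le_one _).2 hrt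
      linarith
    have hA : 0 < ‖a‖ * ‖x‖ ^ r := by positivity
    nlinarith [mul_le_mul_of_nonneg_right hE hD.le]
  · have hlow : 1 - (‖a‖ + B) * ‖x‖ ^ r ≤ ‖1 + z‖ := by
      have := norm_sub_le (1 + z) z
      rw [add_sub_cancel_right, norm_one] at this
      linarith
    have hK1 : (‖a‖ + B) * ‖x‖ ^ r ≤ 1 / 2 := le_trans (by gcongr) hK
    rw [norm_mul, mul_pow]
    gcongr
    calc 1 - r * ((‖a‖ + B) * ‖x‖ ^ r) = 1 + r * (-((‖a‖ + B) * ‖x‖ ^ r)) := by ring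
      _ ≤ (1 + -((‖a‖ + B) * ‖x‖ ^ r)) ^ r := one_add_mul_le_pow (by linarith) r
      _ ≤ ‖1 + z‖ ^ r := by
        apply pow_le_pow_left₀ <;> linarith

/-- The points `(x, y)` with `x` in a truncated sector of half-angle `β` around the direction `v`
and `‖y‖ < ‖x‖ ^ r`. -/
def attractingSector (v : ℂ) (r : ℕ) (β ρ : ℝ) : Set (ℂ × ℂ) :=
  {p | p.1 ≠ 0 ∧ ‖p.1‖ < ρ ∧ |(p.1 * (starRingEnd ℂ) v).arg| < β ∧ ‖p.2‖ < ‖p.1‖ ^ r}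

theorem isOpen_attractingSector {v : ℂ} (hv : ‖v‖ = 1) (r : ℕ) {β : ℝ} (hβ : β ≤ 1) (ρ : ℝ) :
    IsOpen (attractingSector v r β ρ) := by
  rw [isOpen_iff_eventually]
  rintro p ⟨h0, hρ, harg, hy⟩
  have hslit : p.1 * (starRingEnd ℂ) v ∈ Complex.slitPlane := by
    refine Complex.mem_slitPlane_iff_arg.2 ⟨?_, ?_⟩
    · have := (abs_lt.1 harg).2
      linarith [Real.pi_gt_three]
    · rw [← norm_pos_iff, norm_mul, RCLike.norm_conj, hv, mul_one, norm_pos_iff]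
      exact h0
  have hcont : ContinuousAt (fun q : ℂ × ℂ => |(q.1 * (starRingEnd ℂ) v).arg|) p :=
    ((Complex.continuousAt_arg hslit).comp
      (f := fun q : ℂ × ℂ => q.1 * (starRingEnd ℂ) v) (by fun_prop)).abs
  filter_upwards [continuousAt_fst.eventually_ne h0,
    continuousAt_fst.norm.eventually_lt continuousAt_const hρ,
    hcont.eventually_lt continuousAt_const harg,
    continuousAt_snd.norm.eventually_lt (continuousAt_fst.norm.pow r) hy] with q h1 h2 h3 h4
  exact ⟨h1, h2, h3, h4⟩

theorem zero_mem_closure_attractingSector {v : ℂ} (hv : ‖v‖ = 1) (r : ℕ) {β ρ : ℝ} (hβ : 0 < β)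
    (hρ : 0 < ρ) : ((0, 0) : ℂ × ℂ) ∈ closure (attractingSector v r β ρ) := by
  have hlim : Tendsto (fun s : ℝ => (((s : ℂ) * v, 0) : ℂ × ℂ)) (𝓝[>] 0) (𝓝 (0, 0)) := by
    refine Tendsto.mono_left ?_ nhdsWithin_le_nhds
    have : Continuous (fun s : ℝ => (((s : ℂ) * v, 0) : ℂ × ℂ)) := by fun_prop
    simpa using this.tendsto 0
  refine mem_closure_of_tendsto hlim ?_
  filter_upwards [Ioo_mem_nhdsGT hρ] with s ⟨hs0, hsρ⟩
  have hn : ‖(s : ℂ) * v‖ = s := by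
    rw [norm_mul, hv, mul_one, Complex.norm_real, Real.norm_of_nonneg hs0.le]
  refine ⟨?_, by rwa [hn], ?_, ?_⟩
  · rw [← norm_pos_iff, hn]
    exact hs0
  · rw [mul_assoc, Complex.mul_conj, Complex.normSq_eq_norm_sq, hv, one_pow, Complex.ofReal_one,
      mul_one, Complex.arg_ofReal_of_nonneg hs0.le, abs_zero]
    exact hβ
  · rw [hn, norm_zero]
    positivity

/-- The perturbed map preserves a small `attractingSector` around an attracting direction lying in
the right half-plane, and contracts the first coordinate. -/
theorem attractingSector_step {a v x y e₁ e₂ : ℂ} {r : ℕ} {C β ρ : ℝ} (hr : 2 ≤ r) (hC : 0 < C)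
    (ha : a ≠ 0) (hv : ‖v‖ = 1) (hav : a * v ^ r = -(‖a‖ : ℂ))
    (hβr : r * β ≤ 1) (hβv : β ≤ v.re / 2)
    (hp : (x, y) ∈ attractingSector v r β ρ)
    (he₁ : ‖e₁‖ ≤ C * (‖y‖ * ‖(x, y)‖ ^ 2 + ‖x‖ ^ (r + 2)))
    (he₂ : ‖e₂‖ ≤ C * (‖y‖ * ‖(x, y)‖ ^ 2 + ‖x‖ ^ (r + 2)))
    (hx1 : ‖x‖ ≤ 1)
    (hK : (‖a‖ + (1 + 2 * C)) * ‖x‖ ≤ 1 / 2)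
    (har : ‖a‖ * r * ‖x‖ ≤ 1)
    (hEβ : (1 + 2 * C + (‖a‖ + (1 + 2 * C)) ^ 2) * ‖x‖ ≤ ‖a‖ * r * β / 2)
    (hE : (1 + 2 * C + (‖a‖ + (1 + 2 * C)) ^ 2) * ‖x‖ ≤ ‖a‖ / 4)
    (hxv : ‖x‖ ≤ v.re / 2) (hxv1 : v.re / 4 * ‖x‖ ≤ 1)
    (hy : (2 * C + r * (‖a‖ + (1 + 2 * C))) * ‖x‖ < v.re / 4) :
    (x - y ^ 2 + a * x ^ (r + 1) + e₁, y - x * y + e₂) ∈ attractingSector v r β ρ ∧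
    ‖x - y ^ 2 + a * x ^ (r + 1) + e₁‖ ≤ ‖x‖ * Real.exp (-(‖a‖ / 4 * ‖x‖ ^ r)) := by
  obtain ⟨hx0, hxρ, harg, hyx⟩ := hp
  dsimp only at hx0 hxρ harg hyx
  have hd : 0 < ‖x‖ := norm_pos_iff.2 hx0
  have hD : 0 < ‖x‖ ^ r := by positivity
  have hDd : ‖x‖ ^ r ≤ ‖x‖ := pow_le_of_le_one hd.le hx1 (by omega)
  have hD2 : ‖x‖ ^ r ≤ ‖x‖ ^ 2 := pow_le_pow_of_le_one hd.le hx1 hr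
  have hnorm : ‖(x, y)‖ = ‖x‖ := by
    rw [Prod.norm_mk, max_eq_left (hyx.le.trans hDd)]
  have herr : C * (‖y‖ * ‖(x, y)‖ ^ 2 + ‖x‖ ^ (r + 2)) ≤ 2 * C * ‖x‖ ^ (r + 2) := by
    rw [hnorm]
    have : ‖y‖ * ‖x‖ ^ 2 ≤ ‖x‖ ^ r * ‖x‖ ^ 2 := by gcongr
    rw [← pow_add] at this
    nlinarith
  set e := (-y ^ 2 + e₁) / x with hedef
  have he : ‖e‖ ≤ (1 + 2 * C) * ‖x‖ ^ (r + 1) := by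
    rw [hedef, norm_div, div_le_iff₀ hd]
    have hy2 : ‖y‖ ^ 2 ≤ ‖x‖ ^ (r + 2) := by
      calc ‖y‖ ^ 2 ≤ (‖x‖ ^ r) ^ 2 := by gcongr
        _ = ‖x‖ ^ r * ‖x‖ ^ r := by ring
        _ ≤ ‖x‖ ^ r * ‖x‖ ^ 2 := by gcongr
        _ = ‖x‖ ^ (r + 2) := by ring
    calc ‖-y ^ 2 + e₁‖ ≤ ‖-y ^ 2‖ + ‖e₁‖ := norm_add_le _ _
      _ = ‖y‖ ^ 2 + ‖e₁‖ := by rw [norm_neg, norm_pow]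
      _ ≤ ‖x‖ ^ (r + 2) + 2 * C * ‖x‖ ^ (r + 2) := add_le_add hy2 (he₁.trans herr)
      _ = (1 + 2 * C) * ‖x‖ ^ (r + 1) * ‖x‖ := by ring
  have hfst : x - y ^ 2 + a * x ^ (r + 1) + e₁ = x * (1 + (a * x ^ r + e)) := by
    rw [hedef]
    field_simp
    ring
  obtain ⟨hne, harg', hup, hlow⟩ := sector_step (by omega) (by positivity) ha hx0 hv hav hx1 hK he
    hβr harg har hEβ hE
  rw [hfst]
  refine ⟨⟨hne, ?_, harg', ?_⟩, hup⟩
  · refine (hup.trans ?_).trans_lt hxρ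
    exact mul_le_of_le_one_right hd.le (Real.exp_le_one_iff.2 (neg_nonpos.2 (by positivity)))
  · refine lt_of_lt_of_le ?_ hlow
    have hre := re_ge_of_abs_arg_mul_conj_le hv harg.le
    have hcontr : ‖1 - x‖ ≤ 1 - v.re / 4 * ‖x‖ := by
      refine norm_one_sub_le_of_re_ge ?_ (by linarith) hxv1
      nlinarith
    have hsnd : ‖y - x * y + e₂‖ ≤ ‖x‖ ^ r * (1 - v.re / 4 * ‖x‖) + 2 * C * ‖x‖ ^ (r + 2) := by
      have : y - x * y + e₂ = y * (1 - x) + e₂ := by ring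
      rw [this]
      refine (norm_add_le _ _).trans (add_le_add ?_ (he₂.trans herr))
      rw [norm_mul]
      gcongr
    refine hsnd.trans_lt ?_
    have hlt : (2 * C + r * (‖a‖ + (1 + 2 * C))) * ‖x‖ ^ 2 < v.re / 4 * ‖x‖ := by
      nlinarith
    have hrD : r * ((‖a‖ + (1 + 2 * C)) * ‖x‖ ^ r) ≤ r * ((‖a‖ + (1 + 2 * C)) * ‖x‖ ^ 2) := by
      gcongr
    have hfac : 1 - v.re / 4 * ‖x‖ + 2 * C * ‖x‖ ^ 2 <
        1 - r * ((‖a‖ + (1 + 2 * C)) * ‖x‖ ^ r) := by linarith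
    calc ‖x‖ ^ r * (1 - v.re / 4 * ‖x‖) + 2 * C * ‖x‖ ^ (r + 2)
        = ‖x‖ ^ r * (1 - v.re / 4 * ‖x‖ + 2 * C * ‖x‖ ^ 2) := by ring
      _ < _ := mul_lt_mul_of_pos_left hfac hD

theorem eventually_mul_lt_of_pos (X : ℝ) {Y : ℝ} (hY : 0 < Y) : ∀ᶠ d : ℝ in 𝓝 0, X * d < Y := by
  have : Tendsto (fun d : ℝ => X * d) (𝓝 0) (𝓝 (X * 0)) := tendsto_id.const_mul X
  rw [mul_zero] at this
  exact this.eventually_lt_const hY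

/-- For `G(x,y) = (x - y² + a x^{r+1} + η₁(x,y), y - xy + η₂(x,y))`, where the perturbations
`ηᵢ` are holomorphic near the origin and satisfy `|ηᵢ(x,y)| ≤ C(|y|·‖(x,y)‖² + |x|^{r+2})` near
the origin, and either `a ≠ 0` and `r ≥ 3`, or `r = 2` and `a` is not a nonnegative real, there
is a domain of attraction to the origin along `[1:0]`. -/
theorem perturbed_g_has_domain_of_attraction (a : ℂ) (r : ℕ)
    (h : (a ≠ 0 ∧ 3 ≤ r) ∨ (r = 2 ∧ ¬ ∃ t : ℝ, 0 ≤ t ∧ a = (t : ℂ)))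
    (η₁ η₂ : ℂ × ℂ → ℂ)
    (hη₁ : AnalyticAt ℂ η₁ (0, 0)) (hη₂ : AnalyticAt ℂ η₂ (0, 0))
    (C : ℝ) (hC : 0 < C)
    (hbound : ∀ᶠ p : ℂ × ℂ in 𝓝 (0, 0),
      ‖η₁ p‖ ≤ C * (‖p.2‖ * ‖p‖ ^ 2 + ‖p.1‖ ^ (r + 2)) ∧
      ‖η₂ p‖ ≤ C * (‖p.2‖ * ‖p‖ ^ 2 + ‖p.1‖ ^ (r + 2)))
    (G : ℂ × ℂ → ℂ × ℂ)
    (hG : G = fun q : ℂ × ℂ =>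
      (q.1 - q.2 ^ 2 + a * q.1 ^ (r + 1) + η₁ q, q.2 - q.1 * q.2 + η₂ q)) :
    ∃ Ω : Set (ℂ × ℂ), Ω.Nonempty ∧ IsOpen Ω ∧ ((0, 0) : ℂ × ℂ) ∈ closure Ω \ Ω ∧
      ∀ p ∈ Ω,
        Tendsto (fun n => G^[n] p) atTop (𝓝 (0, 0)) ∧
        (∀ n : ℕ, (G^[n] p).1 ≠ 0) ∧
        Tendsto (fun n => (G^[n] p).2 / (G^[n] p).1) atTop (𝓝 0) := by
  have ha : a ≠ 0 := by
    rcases h with ⟨ha, -⟩ | ⟨-, hnot⟩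
    · exact ha
    · rintro rfl
      exact hnot ⟨0, le_rfl, by simp⟩
  have hr : 2 ≤ r := by omega
  obtain ⟨v, hv, hvre, hav⟩ := exists_attracting_direction_re_pos (r := r) ha (h.imp_left And.right)
  have hα : 0 < ‖a‖ := norm_pos_iff.2 ha
  have hr0 : (0 : ℝ) < r := by positivity
  set β : ℝ := min (1 / r) (v.re / 2)
  have hβ0 : 0 < β := lt_min (by positivity) (by positivity)
  have hβr : r * β ≤ 1 := by
    calc r * β ≤ r * (1 / r) := by gcongr; exact min_le_left _ _
      _ = 1 := by field_simp
  have hβ1 : β ≤ 1 := by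
    have : (1 : ℝ) ≤ r := by exact_mod_cast (by omega : 1 ≤ r)
    nlinarith
  obtain ⟨R, hR, hbound⟩ := Metric.eventually_nhds_iff.1 hbound
  have hsmall := (eventually_mul_lt_of_pos 1 hR).and <|
    (eventually_mul_lt_of_pos 1 one_pos).and <|
    (eventually_mul_lt_of_pos (‖a‖ + (1 + 2 * C)) one_half_pos).and <|
    (eventually_mul_lt_of_pos (‖a‖ * r) one_pos).and <|
    (eventually_mul_lt_of_pos (1 + 2 * C + (‖a‖ + (1 + 2 * C)) ^ 2)
      (show 0 < ‖a‖ * r * β / 2 by positivity)).and <|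
    (eventually_mul_lt_of_pos (1 + 2 * C + (‖a‖ + (1 + 2 * C)) ^ 2)
      (show 0 < ‖a‖ / 4 by positivity)).and <|
    (eventually_mul_lt_of_pos 1 (show 0 < v.re / 2 by positivity)).and <|
    (eventually_mul_lt_of_pos (v.re / 4) one_pos).and <|
    eventually_mul_lt_of_pos (2 * C + r * (‖a‖ + (1 + 2 * C))) (show 0 < v.re / 4 by positivity)
  obtain ⟨ρ, hρ, hsmall⟩ := Metric.eventually_nhds_iff.1 hsmall
  have hlt : ∀ p ∈ attractingSector v r β ρ, ‖p.1‖ < 1 ∧ ‖p.1‖ < R := by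
    intro p hp
    obtain ⟨h1, h2, -⟩ := hsmall (y := ‖p.1‖) (by simpa using hp.2.1)
    exact ⟨by linarith, by linarith⟩
  have hsnd : ∀ p ∈ attractingSector v r β ρ, ‖p.2‖ ≤ ‖p.1‖ := fun p hp =>
    hp.2.2.2.le.trans (pow_le_of_le_one (norm_nonneg _) (hlt p hp).1.le (by omega))
  have hstep : ∀ p ∈ attractingSector v r β ρ, G p ∈ attractingSector v r β ρ ∧
      ‖(G p).1‖ ≤ ‖p.1‖ * Real.exp (-(‖a‖ / 4 * ‖p.1‖ ^ r)) := by
    rintro ⟨x, y⟩ hp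
    obtain ⟨-, c1, c2, c3, c4, c5, c6, c7, c8⟩ :=
      hsmall (y := ‖x‖) (by simpa using hp.2.1)
    obtain ⟨b1, b2⟩ := hbound (y := (x, y)) (by
      rw [← Prod.zero_eq_mk, dist_zero_right, Prod.norm_mk, max_eq_left (hsnd _ hp)]
      exact (hlt _ hp).2)
    rw [hG]
    exact attractingSector_step hr hC ha hv hav hβr (min_le_right _ _) hp b1 b2 (by linarith)
      c2.le c3.le c4.le c5.le (by linarith) c7.le c8
  have hclosure := zero_mem_closure_attractingSector hv r hβ0 hρ
  refine ⟨attractingSector v r β ρ, closure_nonempty_iff.1 ⟨_, hclosure⟩,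
    isOpen_attractingSector hv r hβ1 ρ, ⟨hclosure, fun h0 => h0.1 rfl⟩, fun p hp => ?_⟩
  have hmem : ∀ n, G^[n] p ∈ attractingSector v r β ρ := by
    intro n
    induction n with
    | zero => exact hp
    | succ n ih =>
      rw [Function.iterate_succ_apply']
      exact (hstep _ ih).1
  have hx : Tendsto (fun n => ‖(G^[n] p).1‖) atTop (𝓝 0) := by
    refine tendsto_zero_of_le_mul_exp_neg_pow (κ := ‖a‖ / 4) (r := r) (by positivity)
      (fun n => norm_nonneg _) fun n => ?_
    rw [Function.iterate_succ_apply']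
    exact (hstep _ (hmem n)).2
  refine ⟨?_, fun n => (hmem n).1, ?_⟩
  · refine (tendsto_zero_iff_norm_tendsto_zero.2 hx).prodMk_nhds ?_
    exact squeeze_zero_norm (fun n => hsnd _ (hmem n)) hx
  · refine squeeze_zero_norm (fun n => ?_) hx
    have hpos : 0 < ‖(G^[n] p).1‖ := norm_pos_iff.2 (hmem n).1
    rw [norm_div, div_le_iff₀ hpos, ← sq]
    exact (hmem n).2.2.2.le.trans
      (pow_le_pow_of_le_one hpos.le (hlt _ (hmem n)).1.le hr)
end

section
/- Let a ∈ ℂ with a ≠ 0 and let φ : ℂ → ℂ be φ(x) = x(1 + a·x²). Then there exists a nonempty open set U ⊆ ℂ with 0 ∈ closure(U) \ U such that for every x ∈ U, the iterates φ^n(x) converge to 0 as n → ∞. -/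
open Filter Topology

/-- In the coordinate `v = 1 / u`, the map `u ↦ u (1 - u)²` is close to the translation
`v ↦ v + 2`: it moves points of the half-plane `6 < Re v` to the right by at least `1`. -/
lemma re_add_one_le_re_inv_mul_one_sub_sq {u : ℂ} (hu : 6 < (u⁻¹).re) :
    (u⁻¹).re + 1 ≤ ((u * (1 - u) ^ 2)⁻¹).re := by
  obtain ⟨v, rfl⟩ : ∃ v : ℂ, u = v⁻¹ := ⟨u⁻¹, (inv_inv u).symm⟩
  rw [inv_inv] at hu ⊢
  have hw : 5 < ‖v - 1‖ := by
    have := Complex.re_le_norm (v - 1)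
    simp only [Complex.sub_re, Complex.one_re] at this
    linarith
  have hv1 : v - 1 ≠ 0 := norm_pos_iff.mp (by linarith)
  have hv : v ≠ 0 := by
    rintro rfl
    norm_num at hu
  have key : (v⁻¹ * (1 - v⁻¹) ^ 2)⁻¹ = v + 2 + (3 * (v - 1) + 1) / (v - 1) ^ 2 := by
    have : 1 - v⁻¹ = (v - 1) / v := by field_simp
    rw [this]
    field_simp
    ring
  have hbound : ‖(3 * (v - 1) + 1) / (v - 1) ^ 2‖ ≤ 1 := by
    rw [norm_div, norm_pow, div_le_one (by positivity)]
    have := norm_add_le (3 * (v - 1)) 1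
    simp only [norm_mul, Complex.norm_ofNat, norm_one] at this
    nlinarith
  have hre := (abs_le.mp ((Complex.abs_re_le_norm _).trans hbound)).1
  rw [key, Complex.add_re, Complex.add_re, Complex.re_ofNat]
  linarith

/-- Leau–Fatou flower theorem for `φ(x) = x(1 + a x²)` with `a ≠ 0`: there is a nonempty open
set `U ⊆ ℂ` with `0` in its boundary all of whose points converge to `0` under iteration. -/
theorem leau_fatou_petal (a : ℂ) (ha : a ≠ 0) :
    ∃ U : Set ℂ, U.Nonempty ∧ IsOpen U ∧ (0 : ℂ) ∈ closure U \ U ∧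
      ∀ x ∈ U, Tendsto (fun n => (fun t : ℂ => t * (1 + a * t ^ 2))^[n] x) atTop (𝓝 0) := by
  have hclosure : (0 : ℂ) ∈ closure {x : ℂ | 6 < ((-a * x ^ 2)⁻¹).re} := by
    obtain ⟨c, hc⟩ := IsAlgClosed.exists_pow_nat_eq (-a)⁻¹ two_pos
    have hlim : Tendsto (fun n : ℕ => (((n : ℝ)⁻¹ : ℝ) : ℂ) * c) atTop (𝓝 0) := by
      have h := (Complex.continuous_ofReal.tendsto 0).comp
        (tendsto_inv_atTop_nhds_zero_nat (𝕜 := ℝ))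
      simpa using h.mul_const c
    refine mem_closure_of_tendsto hlim ?_
    filter_upwards [eventually_ge_atTop 3] with n hn
    have hn' : (3 : ℝ) ≤ n := by exact_mod_cast hn
    have heq : (-a * ((((n : ℝ)⁻¹ : ℝ) : ℂ) * c) ^ 2)⁻¹ = (((n : ℝ) ^ 2 : ℝ) : ℂ) := by
      rw [mul_pow, hc]
      push_cast
      field_simp
    rw [heq, Complex.ofReal_re]
    nlinarith
  refine ⟨{x | 6 < ((-a * x ^ 2)⁻¹).re}, closure_nonempty_iff.mp ⟨0, hclosure⟩, ?_,
    ⟨hclosure, by norm_num⟩, ?_⟩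
  · rw [isOpen_iff_mem_nhds]
    intro x hx
    have hx0 : -a * x ^ 2 ≠ 0 := by
      intro h
      rw [Set.mem_ofPred_eq, h] at hx
      norm_num at hx
    have hcont : ContinuousAt (fun x : ℂ => ((-a * x ^ 2)⁻¹).re) x :=
      Complex.continuous_re.continuousAt.comp
        (ContinuousAt.inv₀ (by fun_prop) hx0)
    exact hcont.eventually (lt_mem_nhds hx)
  · intro x hx
    set φ : ℂ → ℂ := fun t => t * (1 + a * t ^ 2) with hφ
    have hgrow (n : ℕ) : 6 + (n : ℝ) < ((-a * (φ^[n] x) ^ 2)⁻¹).re := by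
      induction n with
      | zero => simpa using hx
      | succ n ih =>
        rw [Function.iterate_succ_apply']
        set y := φ^[n] x
        have hstep := re_add_one_le_re_inv_mul_one_sub_sq
          (show 6 < ((-a * y ^ 2)⁻¹).re by linarith [n.cast_nonneg (α := ℝ)])
        have hconj : -a * (φ y) ^ 2 = -a * y ^ 2 * (1 - -a * y ^ 2) ^ 2 := by
          simp only [hφ]
          ring
        rw [hconj]
        push_cast
        linarith
    have hinv : Tendsto (fun n => ‖(-a * (φ^[n] x) ^ 2)⁻¹‖) atTop atTop :=
      tendsto_atTop_mono
        (fun n => by linarith [hgrow n, Complex.re_le_norm (-a * (φ^[n] x) ^ 2)⁻¹])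
        tendsto_natCast_atTop_atTop
    have hu : Tendsto (fun n => -a * (φ^[n] x) ^ 2) atTop (𝓝 0) := by
      rw [tendsto_zero_iff_norm_tendsto_zero]
      exact hinv.inv_tendsto_atTop.congr fun n => by rw [Pi.inv_apply, norm_inv, inv_inv]
    have hsq : Tendsto (fun n => (φ^[n] x) ^ 2) atTop (𝓝 0) := by
      simpa [ha] using hu.const_mul (-a)⁻¹
    rw [tendsto_zero_iff_norm_tendsto_zero] at hsq ⊢
    simpa using hsq.sqrt
end

section
/- Let h : ℂ² → ℂ² be h(x,y) = (x − y² + a·x³, y − xy) with a ∈ ℝ, a > 0. Then h has no domain of attraction to the origin along any direction: for every nonzero v ∈ ℂ², there is no nonempty open set Ω ⊆ ℂ² such that for every p ∈ Ω one has h^n(p) → (0,0), h^n(p) ≠ (0,0) for all sufficiently large n, and the projective classes [h^n(p)] converge to [v] in ℙ¹(ℂ). -/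
open Filter Topology

/-- Cesàro: if the increments of a sequence converge, so do its averages. -/
theorem tendsto_div_nat_of_tendsto_sub {d : ℕ → ℂ} {l : ℂ}
    (hd : Tendsto (fun n => d (n + 1) - d n) atTop (𝓝 l)) :
    Tendsto (fun n : ℕ => d n / n) atTop (𝓝 l) := by
  have h1 := hd.cesaro_smul
  have h2 : Tendsto (fun n : ℕ => d 0 / (n : ℂ)) atTop (𝓝 0) :=
    tendsto_const_div_atTop_nhds_zero_nat (d 0)
  have h3 := h1.add h2
  rw [add_zero] at h3
  refine h3.congr fun n => ?_
  rw [Finset.sum_range_sub, Complex.real_smul]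
  push_cast
  ring

/-- If `t` has bounded increments, then a sequence with increments asymptotic to `b / t`,
`b ≠ 0`, does not converge. -/
theorem not_tendsto_of_increments {t s : ℕ → ℂ} {b l c : ℂ} (hb : b ≠ 0)
    (ht : Tendsto (fun n => t (n + 1) - t n) atTop (𝓝 c))
    (hs : Tendsto (fun n => (s (n + 1) - s n) * t n) atTop (𝓝 b)) :
    ¬ Tendsto s atTop (𝓝 l) := by
  intro hl
  have hA : Tendsto (fun n => s n - l) atTop (𝓝 0) := by
    simpa using hl.sub_const l
  have hA' : Tendsto (fun n => s (n + 1) - l) atTop (𝓝 0) := hA.comp (tendsto_add_atTop_nat 1)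
  have h1 : Tendsto (fun n => (s (n + 1) - l) * t (n + 1) - (s n - l) * t n) atTop (𝓝 b) := by
    have := (hA'.mul ht).add hs
    simp only [zero_mul, zero_add] at this
    exact this.congr fun n => by ring
  have h2 := tendsto_div_nat_of_tendsto_sub (d := fun n => (s n - l) * t n) h1
  have h3 := hA.mul (tendsto_div_nat_of_tendsto_sub ht)
  rw [zero_mul] at h3
  exact hb (tendsto_nhds_unique h2 (h3.congr fun n => by ring))

/-- In a nonempty open set, countably many nonzero entire functions have a common
point at which none of them vanishes. -/
theorem exists_mem_forall_ne_zero {F : ℕ → ℂ × ℂ → ℂ} (hF : ∀ k, AnalyticOnNhd ℂ (F k) Set.univ)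
    (hne : ∀ k, ∃ q, F k q ≠ 0) {Ω : Set (ℂ × ℂ)} (hΩ : IsOpen Ω) (hΩne : Ω.Nonempty) :
    ∃ p ∈ Ω, ∀ k, F k p ≠ 0 := by
  have hcont : ∀ k, Continuous (F k) := fun k => continuousOn_univ.1 (hF k).continuousOn
  have hd : Dense (⋂ k, {p | F k p ≠ 0}) := by
    refine dense_iInter_of_isOpen (fun k => isOpen_ne_fun (hcont k) continuous_const) fun k => ?_
    rw [dense_iff_inter_open]
    rintro V hV ⟨z, hz⟩
    by_contra hemp
    obtain ⟨q, hq⟩ := hne k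
    refine hq ((hF k).eqOn_zero_of_preconnected_of_eventuallyEq_zero isPreconnected_univ
      (Set.mem_univ z) ?_ (Set.mem_univ q))
    filter_upwards [hV.mem_nhds hz] with w hw
    by_contra hw0
    exact hemp ⟨w, hw, hw0⟩
  obtain ⟨p, hp, hpk⟩ := hd.inter_open_nonempty Ω hΩ hΩne
  exact ⟨p, hp, fun k => Set.mem_iInter.1 hpk k⟩

/-- A sequence of nonnegative reals growing at least like a divergent product is unbounded. -/
theorem not_bounded_of_growth {D : ℕ → ℝ} {c C : ℝ} (hc : 0 < c) {N : ℕ} (hN : 0 < D N)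
    (hD : ∀ n ≥ N, D n * (1 + c / (n + 1)) ≤ D (n + 1)) : ¬ ∀ n ≥ N, D n ≤ C := by
  intro hb
  have hmono : ∀ n ≥ N, D N ≤ D n := by
    intro n hn
    induction n, hn using Nat.le_induction with
    | base => exact le_rfl
    | succ n hn ih =>
      refine ih.trans (le_trans ?_ (hD n hn))
      have : 0 ≤ c / ((n : ℝ) + 1) := by positivity
      nlinarith
  have hsum : ∀ n ≥ N, D N * c * ∑ i ∈ Finset.range n, 1 / ((i : ℝ) + 1) ≤
      D n + D N * c * ∑ i ∈ Finset.range N, 1 / ((i : ℝ) + 1) := by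
    intro n hn
    induction n, hn using Nat.le_induction with
    | base => linarith
    | succ n hn ih =>
      rw [Finset.sum_range_succ, mul_add]
      have h1 := hD n hn
      have h2 : D N * (c / ((n : ℝ) + 1)) ≤ D n * (c / (n + 1)) :=
        mul_le_mul_of_nonneg_right (hmono n hn) (by positivity)
      have h3 : D N * c * (1 / ((n : ℝ) + 1)) = D N * (c / ((n : ℝ) + 1)) := by ring
      linarith
  have ht := Real.tendsto_sum_range_one_div_nat_succ_atTop.const_mul_atTop (mul_pos hN hc)
  obtain ⟨n, hn, hn'⟩ := ((ht.eventually_gt_atTop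
    (C + D N * c * ∑ i ∈ Finset.range N, 1 / ((i : ℝ) + 1))).and (eventually_ge_atTop N)).exists
  linarith [hsum n hn', hb n hn']

/-- A sequence with increments `O(1 / √n)` is `O(√n)`. -/
theorem exists_norm_le_mul_sqrt {A : ℕ → ℂ} {C : ℝ} (hC : 0 ≤ C)
    (hA : ∀ᶠ n : ℕ in atTop, ‖A (n + 1) - A n‖ * √n ≤ C) :
    ∃ B : ℝ, ∀ᶠ n : ℕ in atTop, ‖A n‖ ≤ B * √n := by
  obtain ⟨N, hN⟩ := eventually_atTop.1 (hA.and (eventually_ge_atTop 1))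
  have key : ∀ n ≥ N, ‖A n‖ ≤ ‖A N‖ + 4 * C * √n := by
    intro n hn
    induction n, hn using Nat.le_induction with
    | base => have : 0 ≤ 4 * C * √(N : ℝ) := by positivity
              linarith
    | succ n hn ih =>
      obtain ⟨h1, h2⟩ := hN n hn
      have h1n : (1 : ℝ) ≤ n := by exact_mod_cast h2
      have hs : 1 ≤ √(n : ℝ) := by simpa using Real.sqrt_le_sqrt h1n
      have hs1 : √(n : ℝ) ≤ √((n : ℝ) + 1) := Real.sqrt_le_sqrt (by linarith)
      have e1 : √(n : ℝ) * √(n : ℝ) = n := Real.mul_self_sqrt (by linarith)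
      have e2 : √((n : ℝ) + 1) * √((n : ℝ) + 1) = n + 1 := Real.mul_self_sqrt (by linarith)
      have hs2 : √((n : ℝ) + 1) ≤ 3 * √(n : ℝ) := by nlinarith
      have h3 : 1 ≤ 4 * (√((n : ℝ) + 1) - √(n : ℝ)) * √(n : ℝ) := by nlinarith
      have h4 : ‖A (n + 1) - A n‖ ≤ 4 * C * (√((n : ℝ) + 1) - √(n : ℝ)) := by
        have : ‖A (n + 1) - A n‖ * √n ≤ 4 * C * (√((n : ℝ) + 1) - √(n : ℝ)) * √n := by
          nlinarith
        exact le_of_mul_le_mul_right this (by linarith)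
      have h5 : ‖A (n + 1)‖ ≤ ‖A n‖ + ‖A (n + 1) - A n‖ := by
        simpa using norm_add_le (A n) (A (n + 1) - A n)
      push_cast
      linarith
  refine ⟨‖A N‖ + 4 * C, ?_⟩
  filter_upwards [eventually_ge_atTop N, eventually_ge_atTop 1] with n hn hn1
  have h1n : (1 : ℝ) ≤ n := by exact_mod_cast hn1
  have hs : 1 ≤ √(n : ℝ) := by simpa using Real.sqrt_le_sqrt h1n
  have := key n hn
  nlinarith [norm_nonneg (A N)]

/-- Third-order Taylor remainder of `exp` along a sequence tending to `0`. -/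
theorem tendsto_exp_sub_div_sq {z : ℕ → ℂ} (hz : Tendsto z atTop (𝓝 0))
    (hz0 : ∀ᶠ n in atTop, z n ≠ 0) :
    Tendsto (fun n => (Complex.exp (z n) - 1 - z n) / z n ^ 2) atTop (𝓝 (1 / 2)) := by
  rw [tendsto_iff_norm_sub_tendsto_zero]
  refine squeeze_zero' (Eventually.of_forall fun n => norm_nonneg _) ?_
    (by simpa using hz.norm : Tendsto (fun n => ‖z n‖) atTop (𝓝 0))
  have hle : ∀ᶠ n in atTop, ‖z n‖ ≤ 1 := by
    have h0 : Tendsto (fun n => ‖z n‖) atTop (𝓝 0) := by simpa using hz.norm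
    exact h0.eventually_le_const one_pos
  filter_upwards [hz0, hle] with n h0 h1
  have hb := Complex.exp_bound h1 (n := 3) (by norm_num)
  have e1 : (Complex.exp (z n) - 1 - z n) / z n ^ 2 - 1 / 2 =
      (Complex.exp (z n) - ∑ m ∈ Finset.range 3, z n ^ m / m.factorial) / z n ^ 2 := by
    simp only [Finset.sum_range_succ, Finset.sum_range_zero, Nat.factorial]
    field_simp
    push_cast
    ring
  rw [e1, norm_div, norm_pow, div_le_iff₀ (by positivity)]
  refine hb.trans ?_
  have : ((Nat.succ 3 : ℕ) : ℝ) * ((Nat.factorial 3 : ℕ) * ((3 : ℕ) : ℝ))⁻¹ ≤ 1 := by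
    norm_num [Nat.factorial]
  calc ‖z n‖ ^ 3 * _ ≤ ‖z n‖ ^ 3 * 1 := by gcongr
    _ = ‖z n‖ * ‖z n‖ ^ 2 := by ring

/-- Expansion of `ρ` near `1` from an expansion of `ρ ^ 2`. -/
theorem exists_sqrt_expansion {X σ ρ Q : ℕ → ℂ} {α q : ℂ} (hX : Tendsto X atTop (𝓝 0))
    (hσ : Tendsto σ atTop (𝓝 1)) (hρ : Tendsto ρ atTop (𝓝 1)) (hQ : Tendsto Q atTop (𝓝 q))
    (h : ∀ᶠ n in atTop, ρ n ^ 2 = 1 + X n ^ 2 * (2 * α * σ n ^ 2 + X n * Q n / σ n ^ 2)) :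
    ∃ ν : ℕ → ℂ, Tendsto ν atTop (𝓝 (q / 2)) ∧
      ∀ᶠ n in atTop, ρ n = 1 + α * X n ^ 2 * σ n ^ 2 + X n ^ 3 * ν n := by
  have hρ1 : Tendsto (fun n => 1 + ρ n) atTop (𝓝 (1 + 1)) := hρ.const_add 1
  have hQσ : Tendsto (fun n => Q n / σ n ^ 2) atTop (𝓝 (q / 1 ^ 2)) :=
    hQ.div (hσ.pow 2) (by norm_num)
  refine ⟨fun n => (Q n / σ n ^ 2 - α * σ n ^ 2 * X n *
    (2 * α * σ n ^ 2 + X n * (Q n / σ n ^ 2)) / (1 + ρ n)) / (1 + ρ n), ?_, ?_⟩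
  · have h1 := (hQσ.sub (((((hσ.pow 2).const_mul α).mul hX).mul
      (((hσ.pow 2).const_mul (2 * α)).add (hX.mul hQσ))).div hρ1 (by norm_num))).div hρ1
      (by norm_num)
    convert h1 using 2
    · rfl
    · ring
  · filter_upwards [h, hρ1.eventually_ne (by norm_num : (1 + 1 : ℂ) ≠ 0),
      hσ.eventually_ne one_ne_zero] with n hn h1 h2
    have h3 : ρ n - 1 = X n ^ 2 * (2 * α * σ n ^ 2 + X n * (Q n / σ n ^ 2)) / (1 + ρ n) := by
      rw [eq_div_iff h1]
      linear_combination hn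
    generalize hg : 2 * α * σ n ^ 2 + X n * (Q n / σ n ^ 2) = g at h3 ⊢
    generalize Q n / σ n ^ 2 = k at hg ⊢
    have h4 : ρ n - 1 = X n ^ 2 * (g / (1 + ρ n)) := by rw [h3]; ring
    have h5 : g / (1 + ρ n) * (1 + ρ n) = g := div_mul_cancel₀ _ h1
    have h6 : X n ^ 3 * ((k - α * σ n ^ 2 * X n * g / (1 + ρ n)) / (1 + ρ n)) =
        X n ^ 2 * (X n * k - α * σ n ^ 2 * (X n ^ 2 * (g / (1 + ρ n)))) / (1 + ρ n) := by
      ring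
    rw [h6, ← h4]
    field_simp
    have h7 : (ρ n - 1) * (1 + ρ n) = X n ^ 2 * g := by rw [h4]; linear_combination X n ^ 2 * h5
    linear_combination h7 - X n ^ 2 * hg

/-- Expansion of the increments of `r = 1 / s` from an expansion of the ratios of `s`. -/
theorem exists_inv_expansion {X σ ρ ν r : ℕ → ℂ} {α q : ℂ} (hX0 : ∀ n, X n ≠ 0)
    (hX : Tendsto X atTop (𝓝 0))
    (hσ : Tendsto σ atTop (𝓝 1)) (hρ : Tendsto ρ atTop (𝓝 1)) (hν : Tendsto ν atTop (𝓝 q))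
    (hr : ∀ n, r n = 1 / (X n * σ n))
    (hs : ∀ᶠ n in atTop, X (n + 1) * σ (n + 1) = X n * σ n * ρ n)
    (h : ∀ᶠ n in atTop, ρ n = 1 + α * X n ^ 2 * σ n ^ 2 + X n ^ 3 * ν n) :
    ∃ e : ℕ → ℂ, Tendsto e atTop (𝓝 (-q)) ∧
      ∀ᶠ n in atTop, r (n + 1) = r n - α * (X n * σ n) + X n ^ 2 * e n := by
  refine ⟨fun n => (α * σ n * X n * (α * σ n ^ 2 + X n * ν n) - ν n / σ n) / ρ n, ?_, ?_⟩
  · have h1 := (((((hσ.const_mul α).mul hX).mul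
      (((hσ.pow 2).const_mul α).add (hX.mul hν))).sub (hν.div hσ one_ne_zero)).div hρ one_ne_zero)
    convert h1 using 2
    · rfl
    · ring
  · filter_upwards [h, hs, hσ.eventually_ne one_ne_zero, hρ.eventually_ne one_ne_zero]
      with n hn h1 h2 h3
    have h0 := hX0 n
    rw [hr, hr, h1]
    field_simp
    linear_combination (α * X n ^ 2 * σ n ^ 2 - 1) * hn

/-- Expansion of the ratio `(1 - X) (1 + σ) / (q + σ ρ)`. -/
theorem exists_ratio_expansion {X σ ρ ν U k : ℕ → ℂ} {α ν₀ κ : ℂ}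
    (hX : Tendsto X atTop (𝓝 0)) (hσ : Tendsto σ atTop (𝓝 1)) (hν : Tendsto ν atTop (𝓝 ν₀))
    (hk : Tendsto k atTop (𝓝 κ))
    (hU : ∀ n, U n ^ 2 = 1 - σ n ^ 2 + X n * k n)
    (h : ∀ᶠ n in atTop, ρ n = 1 + α * X n ^ 2 * σ n ^ 2 + X n ^ 3 * ν n) :
    ∃ ω : ℕ → ℂ, Tendsto ω atTop (𝓝 (-((2 * α - κ) / 2))) ∧
      ∀ᶠ n in atTop, (1 - X n) * (1 + σ n) =
        (1 - U n ^ 2 * X n + α * X n ^ 2 + σ n * ρ n) * (1 - X n * σ n + X n ^ 2 * ω n) := by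
  have hσ1 : Tendsto (fun n => 1 + σ n) atTop (𝓝 (1 + 1)) := hσ.const_add 1
  obtain ⟨m, hm⟩ : ∃ m : ℕ → ℂ,
      m = fun n => (α - k n + α * σ n ^ 3 + X n * σ n * ν n) / (1 + σ n) := ⟨_, rfl⟩
  have hmt : Tendsto m atTop (𝓝 ((2 * α - κ) / 2)) := by
    have h1 := ((((hk.const_sub α).add ((hσ.pow 3).const_mul α)).add
      ((hX.mul hσ).mul hν)).div hσ1 (by norm_num))
    rw [hm]
    convert h1 using 2
    · rfl
    · ring
  have hden : Tendsto (fun n => 1 - X n + X n * σ n + X n ^ 2 * m n) atTop (𝓝 1) := by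
    have h1 := ((hX.const_sub 1).add (hX.mul hσ)).add ((hX.pow 2).mul hmt)
    convert h1 using 2
    ring
  refine ⟨fun n => (σ n * (σ n - 1 + X n * m n) - m n) /
    (1 - X n + X n * σ n + X n ^ 2 * m n), ?_, ?_⟩
  · have h1 := ((hσ.mul ((hσ.sub_const 1).add (hX.mul hmt))).sub hmt).div hden one_ne_zero
    convert h1 using 2
    · rfl
    · ring
  · filter_upwards [h, hσ1.eventually_ne (by norm_num : (1 + 1 : ℂ) ≠ 0),
      hden.eventually_ne one_ne_zero]
      with n hn h1 h2
    have h3 : m n * (1 + σ n) = α - k n + α * σ n ^ 3 + X n * σ n * ν n := by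
      rw [hm]
      exact div_mul_cancel₀ _ h1
    have h4 : 1 - U n ^ 2 * X n + α * X n ^ 2 + σ n * ρ n =
        (1 + σ n) * (1 - X n + X n * σ n + X n ^ 2 * m n) := by
      rw [hU, hn]
      linear_combination -X n ^ 2 * h3
    rw [h4]
    generalize m n = m' at *
    field_simp
    ring

/-- Near the degenerate direction, `s = X σ`, a square root of the approximate first integral
`x² - y² + (8a - 3) / 3 x³ + (1 - 2a) x y²`, and `w = U / (1 + σ)` are coordinates in which the
dynamics has constant coefficients up to the relevant order. -/
theorem exists_normal_form {X U : ℕ → ℂ} {α : ℂ} (hX0 : ∀ n, X n ≠ 0)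
    (hX : Tendsto X atTop (𝓝 0)) (hU : Tendsto U atTop (𝓝 0))
    (recX : ∀ n, X (n + 1) = X n * (1 - U n ^ 2 * X n + α * X n ^ 2))
    (recU : ∀ n, U (n + 1) * X (n + 1) = U n * X n * (1 - X n)) :
    ∃ σ e ω : ℕ → ℂ, Tendsto σ atTop (𝓝 1) ∧ Tendsto e atTop (𝓝 (α * (8 * α - 3) / 6)) ∧
      Tendsto ω atTop (𝓝 (α / 3 - 1 / 2)) ∧
      (∀ᶠ n in atTop, 1 / (X (n + 1) * σ (n + 1)) =
        1 / (X n * σ n) - α * (X n * σ n) + X n ^ 2 * e n) ∧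
      (∀ᶠ n in atTop, U (n + 1) / (1 + σ (n + 1)) =
        U n / (1 + σ n) * (1 - X n * σ n + X n ^ 2 * ω n)) := by
  obtain ⟨κ, hκ⟩ : ∃ κ : ℂ, κ = (8 * α - 3) / 3 := ⟨_, rfl⟩
  have hXU : Tendsto (fun n => (X n, U n)) atTop (𝓝 ((0 : ℂ), (0 : ℂ))) := hX.prodMk_nhds hU
  obtain ⟨k, hk⟩ : ∃ k : ℕ → ℂ, ∀ n, k n = κ + (1 - 2 * α) * U n ^ 2 := ⟨_, fun _ => rfl⟩
  obtain ⟨f, hf⟩ : ∃ f : ℕ → ℂ, ∀ n, f n = 1 - U n ^ 2 + X n * k n := ⟨_, fun _ => rfl⟩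
  obtain ⟨Q, hQ⟩ : ∃ Q : ℕ → ℂ, ∀ n, Q n = -2 * α * U n ^ 2 + α ^ 2 * X n +
      κ * (3 * α + 3 * (-U n ^ 2 + α * X n) ^ 2 + X n * (-U n ^ 2 + α * X n) ^ 3) +
      (1 - 2 * α) * U n ^ 2 * (α * (1 - X n) ^ 2 - U n ^ 2 * (-2 + X n) + 1) -
      4 * α * (1 - U n ^ 2) * (κ + (1 - 2 * α) * U n ^ 2) -
      2 * α * X n * (κ + (1 - 2 * α) * U n ^ 2) ^ 2 := ⟨_, fun _ => rfl⟩
  have hkt : Tendsto k atTop (𝓝 κ) := by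
    have hc : Continuous fun p : ℂ × ℂ => κ + (1 - 2 * α) * p.2 ^ 2 := by fun_prop
    have h1 := (hc.tendsto (0, 0)).comp hXU
    convert h1 using 2
    · exact funext hk
    · simp
  have hft : Tendsto f atTop (𝓝 1) := by
    have h1 := ((hU.pow 2).const_sub 1).add (hX.mul hkt)
    convert h1 using 2
    · exact hf _
    · simp
  have hQt : Tendsto Q atTop (𝓝 (-(α * κ))) := by
    have hc : Continuous fun p : ℂ × ℂ => -2 * α * p.2 ^ 2 + α ^ 2 * p.1 +
      κ * (3 * α + 3 * (-p.2 ^ 2 + α * p.1) ^ 2 + p.1 * (-p.2 ^ 2 + α * p.1) ^ 3) +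
      (1 - 2 * α) * p.2 ^ 2 * (α * (1 - p.1) ^ 2 - p.2 ^ 2 * (-2 + p.1) + 1) -
      4 * α * (1 - p.2 ^ 2) * (κ + (1 - 2 * α) * p.2 ^ 2) -
      2 * α * p.1 * (κ + (1 - 2 * α) * p.2 ^ 2) ^ 2 := by fun_prop
    have h1 := (hc.tendsto (0, 0)).comp hXU
    convert h1 using 2
    · exact funext hQ
    · simp only
      ring
  have hF : ∀ n, X (n + 1) ^ 2 * f (n + 1) =
      X n ^ 2 * (f n + X n ^ 2 * (2 * α * f n ^ 2 + X n * Q n)) := by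
    intro n
    have e1 : X (n + 1) ^ 2 * f (n + 1) = X (n + 1) ^ 2 - (U (n + 1) * X (n + 1)) ^ 2 +
        κ * X (n + 1) ^ 3 + (1 - 2 * α) * X (n + 1) * (U (n + 1) * X (n + 1)) ^ 2 := by
      rw [hf, hk]
      ring
    rw [e1, recU, recX, hQ, hf, hk, hκ]
    ring
  obtain ⟨σ, hσ⟩ : ∃ σ : ℕ → ℂ, ∀ n, σ n = f n ^ (((2 : ℕ) : ℂ)⁻¹) := ⟨_, fun _ => rfl⟩
  have hσf : ∀ n, σ n ^ 2 = f n := fun n => by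
    rw [hσ]
    exact Complex.cpow_nat_inv_pow _ two_ne_zero
  have hσt : Tendsto σ atTop (𝓝 1) := by
    have h1 := (continuousAt_cpow_const (b := ((2 : ℕ) : ℂ)⁻¹)
      Complex.one_mem_slitPlane).tendsto.comp hft
    rw [Complex.one_cpow] at h1
    exact h1.congr fun n => (hσ n).symm
  obtain ⟨ρ, hρ⟩ : ∃ ρ : ℕ → ℂ, ∀ n, ρ n =
      (1 - U n ^ 2 * X n + α * X n ^ 2) * σ (n + 1) / σ n := ⟨_, fun _ => rfl⟩
  have hqt : Tendsto (fun n => 1 - U n ^ 2 * X n + α * X n ^ 2) atTop (𝓝 1) := by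
    have h1 := (((hU.pow 2).mul hX).const_sub 1).add ((hX.pow 2).const_mul α)
    convert h1 using 2
    simp
  have hσt' : Tendsto (fun n => σ (n + 1)) atTop (𝓝 1) := hσt.comp (tendsto_add_atTop_nat 1)
  have hρt : Tendsto ρ atTop (𝓝 1) := by
    have h1 := (hqt.mul hσt').div hσt one_ne_zero
    convert h1 using 2
    · exact funext hρ
    · simp
  have hs : ∀ᶠ n in atTop, X (n + 1) * σ (n + 1) = X n * σ n * ρ n := by
    filter_upwards [hσt.eventually_ne one_ne_zero] with n hn
    rw [hρ, recX]
    field_simp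
  have hρ2 : ∀ᶠ n in atTop,
      ρ n ^ 2 = 1 + X n ^ 2 * (2 * α * σ n ^ 2 + X n * Q n / σ n ^ 2) := by
    filter_upwards [hs, hσt.eventually_ne one_ne_zero] with n h1 h2
    have h3 : (X n * σ n * ρ n) ^ 2 =
        X n ^ 2 * (σ n ^ 2 + X n ^ 2 * (2 * α * (σ n ^ 2) ^ 2 + X n * Q n)) := by
      rw [← h1, mul_pow, hσf, hF, hσf]
    have h0 := hX0 n
    have h4 : (X n * σ n) ^ 2 ≠ 0 := by positivity
    apply mul_left_cancel₀ h4
    rw [← mul_pow, h3]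
    field_simp
  obtain ⟨ν, hνt, hν⟩ := exists_sqrt_expansion hX hσt hρt hQt hρ2
  obtain ⟨e, het, he⟩ := exists_inv_expansion (r := fun n => 1 / (X n * σ n)) hX0 hX hσt hρt hνt
    (fun _ => rfl) hs hν
  obtain ⟨ω, hωt, hω⟩ := exists_ratio_expansion (U := U) hX hσt hνt hkt
    (fun n => by rw [hσf, hf]; ring) hν
  refine ⟨σ, e, ω, hσt, ?_, ?_, he, ?_⟩
  · convert het using 2
    rw [hκ]
    ring
  · convert hωt using 2
    rw [hκ]
    ring
  · have h2 : (1 + 1 : ℂ) ≠ 0 := by norm_num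
    filter_upwards [hω, (hσt.const_add 1).eventually_ne h2, (hσt'.const_add 1).eventually_ne h2,
      hqt.eventually_ne one_ne_zero, hσt.eventually_ne one_ne_zero] with n h1 h3 h4 h5 h6
    have h7 : (1 - U n ^ 2 * X n + α * X n ^ 2) * U (n + 1) = U n * (1 - X n) := by
      apply mul_left_cancel₀ (hX0 n)
      have := recU n
      rw [recX] at this
      linear_combination this
    have h8 : σ n * ρ n = (1 - U n ^ 2 * X n + α * X n ^ 2) * σ (n + 1) := by
      rw [hρ]
      field_simp
    rw [h8] at h1
    generalize 1 - U n ^ 2 * X n + α * X n ^ 2 = q at *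
    rw [div_mul_eq_mul_div, div_eq_div_iff h4 h3]
    apply mul_left_cancel₀ h5
    linear_combination (1 + σ n) * h7 + U n * h1

/-- No orbit off the invariant line `y = 0` converges to the origin along `[1 : 0]`. -/
theorem false_of_degenerate {X U : ℕ → ℂ} {a : ℝ} (ha : 0 < a) (hX0 : ∀ n, X n ≠ 0)
    (hU0 : ∀ n, U n ≠ 0) (hX : Tendsto X atTop (𝓝 0)) (hU : Tendsto U atTop (𝓝 0))
    (recX : ∀ n, X (n + 1) = X n * (1 - U n ^ 2 * X n + a * X n ^ 2))
    (recU : ∀ n, U (n + 1) * X (n + 1) = U n * X n * (1 - X n)) : False := by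
  obtain ⟨σ, e, ω, hσ, he, hω, hr, hw⟩ := exists_normal_form hX0 hX hU recX recU
  have haC : (a : ℂ) ≠ 0 := by exact_mod_cast ha.ne'
  have hσ0 := hσ.eventually_ne one_ne_zero
  obtain ⟨r, hr'⟩ : ∃ r : ℕ → ℂ, ∀ n, r n = 1 / (X n * σ n) := ⟨_, fun _ => rfl⟩
  obtain ⟨w, hw'⟩ : ∃ w : ℕ → ℂ, ∀ n, w n = U n / (1 + σ n) := ⟨_, fun _ => rfl⟩
  simp only [← hr', ← hw'] at hr hw
  -- the growth of `r ^ 2`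
  obtain ⟨τ, hτ⟩ : ∃ τ : ℕ → ℂ, ∀ n, τ n =
      2 * (e n / σ n) + X n * (-a * σ n + X n * e n) ^ 2 := ⟨_, fun _ => rfl⟩
  have hτt := ((he.div hσ one_ne_zero).const_mul 2).add
    (hX.mul (((hσ.const_mul (-(a : ℂ))).add (hX.mul he)).pow 2))
  replace hτt := hτt.congr fun n => (hτ n).symm
  have hT : ∀ᶠ n in atTop, r (n + 1) ^ 2 - r n ^ 2 = -2 * a + X n * τ n := by
    filter_upwards [hr, hσ0] with n h1 h2
    have h0 := hX0 n
    rw [h1, hτ, hr']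
    field_simp
    ring
  have hTt : Tendsto (fun n => r (n + 1) ^ 2 - r n ^ 2) atTop (𝓝 (-2 * a)) := by
    have h1 := (hX.mul hτt).const_add (-2 * (a : ℂ))
    rw [zero_mul, add_zero] at h1
    exact h1.congr' (hT.mono fun n h => h.symm)
  have hTn := tendsto_div_nat_of_tendsto_sub (d := fun n => r n ^ 2) hTt
  have hXn : Tendsto (fun n : ℕ => X n ^ 2 * n) atTop (𝓝 (-(1 / (2 * a)))) := by
    have h1 := (hTn.mul (hσ.pow 2)).inv₀ (by simpa using haC)
    have h2 : (-2 * (a : ℂ) * 1 ^ 2)⁻¹ = -(1 / (2 * (a : ℂ))) := by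
      field_simp
    rw [h2] at h1
    refine h1.congr' ?_
    filter_upwards [hσ0] with n h2
    have h0 := hX0 n
    rw [hr']
    field_simp
  have hXs : Tendsto (fun n : ℕ => ‖X n‖ * √n) atTop (𝓝 √‖(-(1 / (2 * a)) : ℂ)‖) := by
    refine hXn.norm.sqrt.congr fun n => ?_
    rw [norm_mul, norm_pow, Complex.norm_natCast, Real.sqrt_mul (by positivity),
      Real.sqrt_sq (norm_nonneg _)]
  -- the real part of `r` is bounded
  obtain ⟨B, hB⟩ : ∃ B : ℝ, ∀ᶠ n : ℕ in atTop, ‖r n ^ 2 + 2 * a * n‖ ≤ B * √n := by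
    have h1 := hτt.norm.mul hXs
    obtain ⟨C, h2⟩ : ∃ C : ℝ, ∀ᶠ n : ℕ in atTop, ‖τ n‖ * (‖X n‖ * √n) ≤ C :=
      ⟨_, h1.eventually_le_const (lt_add_one _)⟩
    refine exists_norm_le_mul_sqrt (A := fun n => r n ^ 2 + 2 * a * n) (abs_nonneg C) ?_
    filter_upwards [h2, hT] with n h3 h4
    refine le_trans (le_of_eq ?_) (h3.trans (le_abs_self C))
    have : r (n + 1) ^ 2 + 2 * a * ((n + 1 : ℕ) : ℂ) - (r n ^ 2 + 2 * a * n) = X n * τ n := by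
      push_cast
      linear_combination h4
    rw [this, norm_mul]
    ring
  have hTre : ∀ᶠ n : ℕ in atTop, (r n ^ 2).re ≤ -(a * n) := by
    have h1 := (Complex.continuous_re.tendsto _).comp hTn
    have h2 : ((-2 * (a : ℂ))).re < -a := by
      simp
      linarith
    filter_upwards [h1.eventually_lt_const h2, eventually_gt_atTop 0] with n h3 h4
    have h4' : (0 : ℝ) < n := by exact_mod_cast h4
    simp only [Function.comp_apply, Complex.div_natCast_re] at h3
    rw [div_lt_iff₀ h4'] at h3
    linarith
  have hre : ∀ᶠ n in atTop, (r n).re ^ 2 ≤ B ^ 2 / (4 * a) := by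
    filter_upwards [hB, hTre, eventually_gt_atTop 0] with n h1 h2 h4
    have h4' : (0 : ℝ) < n := by exact_mod_cast h4
    have h5 := (Complex.abs_im_le_norm _).trans h1
    have h6 : (r n ^ 2 + 2 * a * n).im = 2 * (r n).re * (r n).im := by
      simp [pow_two]
      ring
    have h7 : (r n ^ 2).re = (r n).re ^ 2 - (r n).im ^ 2 := by
      simp [pow_two]
    rw [h6] at h5
    rw [h7] at h2
    have h8 : (2 * (r n).re * (r n).im) ^ 2 ≤ B ^ 2 * n := by
      have := pow_le_pow_left₀ (abs_nonneg _) h5 2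
      rwa [sq_abs, mul_pow B, Real.sq_sqrt h4'.le] at this
    have h9 : a * n ≤ (r n).im ^ 2 := by nlinarith [sq_nonneg (r n).re]
    rw [le_div_iff₀ (by positivity)]
    have h10 : (r n).re ^ 2 * (a * n) ≤ (r n).re ^ 2 * (r n).im ^ 2 :=
      mul_le_mul_of_nonneg_left h9 (sq_nonneg _)
    refine le_of_mul_le_mul_right (a := (n : ℝ)) ?_ h4'
    nlinarith
  -- the quantity `P = w exp (-r / a)` does not decrease in modulus
  obtain ⟨ζ, hζ⟩ : ∃ ζ : ℕ → ℂ, ∀ n, ζ n = σ n - X n * (e n / a) := ⟨_, fun _ => rfl⟩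
  have hζt : Tendsto ζ atTop (𝓝 1) := by
    have h1 := hσ.sub (hX.mul (he.div_const (a : ℂ)))
    rw [zero_mul, sub_zero] at h1
    exact h1.congr fun n => (hζ n).symm
  have hz : Tendsto (fun n => X n * ζ n) atTop (𝓝 0) := by simpa using hX.mul hζt
  have hz0 : ∀ᶠ n in atTop, X n * ζ n ≠ 0 := by
    filter_upwards [hζt.eventually_ne one_ne_zero] with n hn
    exact mul_ne_zero (hX0 n) hn
  obtain ⟨ε, hε⟩ : ∃ ε : ℕ → ℂ, ∀ n, ε n =
      (Complex.exp (X n * ζ n) - 1 - X n * ζ n) / (X n * ζ n) ^ 2 := ⟨_, fun _ => rfl⟩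
  have hεt : Tendsto ε atTop (𝓝 (1 / 2)) :=
    (tendsto_exp_sub_div_sq hz hz0).congr fun n => (hε n).symm
  obtain ⟨P, hP⟩ : ∃ P : ℕ → ℂ, ∀ n, P n = w n * Complex.exp (-(r n / a)) := ⟨_, fun _ => rfl⟩
  obtain ⟨θ, hθ⟩ : ∃ θ : ℕ → ℂ, ∀ n, θ n = -(e n / a) + ω n - σ n * ζ n + ζ n ^ 2 * ε n +
      X n * (ω n * ζ n - σ n * ζ n ^ 2 * ε n) + X n ^ 2 * (ω n * ζ n ^ 2 * ε n) :=
    ⟨_, fun _ => rfl⟩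
  have hθt : Tendsto θ atTop (𝓝 (-(a + 1 / 2))) := by
    have h1 := (((((he.div_const (a : ℂ)).neg.add hω).sub (hσ.mul hζt)).add
      ((hζt.pow 2).mul hεt)).add (hX.mul ((hω.mul hζt).sub ((hσ.mul (hζt.pow 2)).mul hεt)))).add
      ((hX.pow 2).mul ((hω.mul (hζt.pow 2)).mul hεt))
    convert h1 using 2
    · rw [hθ]
    · field_simp
      ring
  have hPrec : ∀ᶠ n in atTop, P (n + 1) = P n * (1 + X n ^ 2 * θ n) := by
    filter_upwards [hr, hw, hz0] with n h1 h2 h3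
    have h4 : -(r (n + 1) / a) = -(r n / a) + X n * ζ n := by
      rw [h1, hζ]
      field_simp
      ring
    have h5 : Complex.exp (X n * ζ n) = 1 + X n * ζ n + (X n * ζ n) ^ 2 * ε n := by
      rw [hε, mul_div_cancel₀ _ (pow_ne_zero 2 h3)]
      ring
    have h6 : ζ n = σ n - X n * (e n / a) := hζ n
    rw [hP, hP, h2, h4, Complex.exp_add, h5, hθ]
    linear_combination (w n * Complex.exp (-(r n / a)) * X n) * h6
  have hgrow : ∀ᶠ n in atTop, ‖P n‖ ≤ ‖P (n + 1)‖ := by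
    have h1 := hθt.mul hXn
    have h2 := (Complex.continuous_re.tendsto _).comp h1
    have h3 : 0 < (-((a : ℂ) + 1 / 2) * -(1 / (2 * a))).re := by
      have : (-((a : ℂ) + 1 / 2) * -(1 / (2 * a))) = (((a + 1 / 2) * (1 / (2 * a)) : ℝ) : ℂ) := by
        push_cast
        ring
      rw [this, Complex.ofReal_re]
      positivity
    filter_upwards [h2.eventually_const_lt h3, hPrec, eventually_gt_atTop 0] with n h4 h5 h6
    have h6' : (0 : ℝ) < n := by exact_mod_cast h6
    have h7 : 0 < (X n ^ 2 * θ n).re := by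
      have h8 : θ n * (X n ^ 2 * n) = ((n : ℝ) : ℂ) * (X n ^ 2 * θ n) := by
        push_cast
        ring
      simp only [Function.comp_apply] at h4
      rw [h8, Complex.re_ofReal_mul] at h4
      exact pos_of_mul_pos_right h4 h6'.le
    have h9 : 1 ≤ ‖1 + X n ^ 2 * θ n‖ := by
      refine le_trans ?_ (Complex.re_le_norm _)
      rw [Complex.add_re, Complex.one_re]
      linarith
    rw [h5, norm_mul]
    exact le_mul_of_one_le_right (norm_nonneg _) h9
  have hσ1 : Tendsto (fun n => 1 + σ n) atTop (𝓝 (1 + 1)) := hσ.const_add 1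
  have h11 : (1 + 1 : ℂ) ≠ 0 := by norm_num
  have hwt : Tendsto (fun n => ‖w n‖) atTop (𝓝 0) := by
    have h1 := (hU.div hσ1 h11).norm
    rw [zero_div, norm_zero] at h1
    exact h1.congr fun n => by rw [hw']; rfl
  obtain ⟨N, hN⟩ := eventually_atTop.1 (hgrow.and (hσ1.eventually_ne h11))
  have hPN : 0 < ‖P N‖ := by
    rw [norm_pos_iff, hP, hw']
    exact mul_ne_zero (div_ne_zero (hU0 N) (hN N le_rfl).2) (Complex.exp_ne_zero _)
  have hmono : ∀ n ≥ N, ‖P N‖ ≤ ‖P n‖ := by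
    intro n hn
    induction n, hn using Nat.le_induction with
    | base => exact le_rfl
    | succ n hn ih => exact ih.trans (hN n hn).1
  have hPt : Tendsto (fun n => ‖w n‖ * Real.exp ((1 + B ^ 2 / (4 * a)) / a)) atTop (𝓝 0) := by
    simpa using hwt.mul_const (Real.exp ((1 + B ^ 2 / (4 * a)) / a))
  obtain ⟨n, h1, h2, h3⟩ := ((hPt.eventually_lt_const hPN).and
    (hre.and (eventually_ge_atTop N))).exists
  have h4 : ‖P n‖ ≤ ‖w n‖ * Real.exp ((1 + B ^ 2 / (4 * a)) / a) := by
    rw [hP, norm_mul, Complex.norm_exp]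
    refine mul_le_mul_of_nonneg_left (Real.exp_le_exp.2 ?_) (norm_nonneg _)
    rw [Complex.neg_re, Complex.div_ofReal_re, ← neg_div]
    refine div_le_div_of_nonneg_right ?_ ha.le
    nlinarith [sq_nonneg ((r n).re + 1)]
  linarith [hmono n h3]

/-- The map `(x, y) ↦ (x - y² + α x³, y - x y)`. -/
def cubicMap (α : ℂ) (q : ℂ × ℂ) : ℂ × ℂ := (q.1 - q.2 ^ 2 + α * q.1 ^ 3, q.2 - q.1 * q.2)

/-- The Jacobian determinant of `cubicMap α`. -/
def cubicJacobian (α : ℂ) (q : ℂ × ℂ) : ℂ :=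
  (1 + 3 * α * q.1 ^ 2) * (1 - q.1) - 2 * q.2 ^ 2

/-- The image of the tangent vector `e` at `p` under the derivative of the `n`-th iterate. -/
def cubicTangent (α : ℂ) (p e : ℂ × ℂ) : ℕ → ℂ × ℂ
  | 0 => e
  | n + 1 =>
    ((1 + 3 * α * ((cubicMap α)^[n] p).1 ^ 2) * (cubicTangent α p e n).1 -
        2 * ((cubicMap α)^[n] p).2 * (cubicTangent α p e n).2,
      -((cubicMap α)^[n] p).2 * (cubicTangent α p e n).1 +
        (1 - ((cubicMap α)^[n] p).1) * (cubicTangent α p e n).2)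

theorem analyticAt_iterate_cubicMap (α : ℂ) (n : ℕ) (p : ℂ × ℂ) :
    AnalyticAt ℂ ((cubicMap α)^[n]) p := by
  induction n with
  | zero => exact analyticAt_id
  | succ n ih =>
    rw [Function.iterate_succ']
    refine AnalyticAt.comp ?_ ih
    generalize (cubicMap α)^[n] p = q
    have h1 : AnalyticAt ℂ (fun q : ℂ × ℂ => q.1) q := analyticAt_fst
    have h2 : AnalyticAt ℂ (fun q : ℂ × ℂ => q.2) q := analyticAt_snd
    exact ((h1.sub (h2.pow 2)).add (analyticAt_const.mul (h1.pow 3))).prod (h2.sub (h1.mul h2))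

theorem iterate_cubicMap_zero (α : ℂ) (n : ℕ) : (cubicMap α)^[n] 0 = 0 :=
  Function.iterate_fixed (by simp [cubicMap]) n

theorem hasDerivAt_iterate_cubicMap (α : ℂ) (p e : ℂ × ℂ) (n : ℕ) :
    HasDerivAt (fun t : ℂ => (cubicMap α)^[n] (p + t • e)) (cubicTangent α p e n) 0 := by
  induction n with
  | zero =>
    simp only [Function.iterate_zero, id_eq, cubicTangent]
    simpa using ((hasDerivAt_id (0 : ℂ)).smul_const e).const_add p
  | succ n ih =>
    simp only [Function.iterate_succ_apply']
    have h1 : HasDerivAt (fun t : ℂ => ((cubicMap α)^[n] (p + t • e)).1) _ 0 :=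
      (ContinuousLinearMap.fst ℂ ℂ ℂ).hasFDerivAt.comp_hasDerivAt 0 ih
    have h2 : HasDerivAt (fun t : ℂ => ((cubicMap α)^[n] (p + t • e)).2) _ 0 :=
      (ContinuousLinearMap.snd ℂ ℂ ℂ).hasFDerivAt.comp_hasDerivAt 0 ih
    have h3 := ((h1.sub (h2.pow 2)).add ((h1.pow 3).const_mul α)).prodMk (h2.sub (h1.mul h2))
    refine HasDerivAt.congr_deriv (f := fun t : ℂ => cubicMap α ((cubicMap α)^[n] (p + t • e)))
      h3 ?_
    simp only [cubicTangent, zero_smul, add_zero]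
    ext
    · simp
      ring
    · simp
      ring

theorem det_cubicTangent (α : ℂ) (p e e' : ℂ × ℂ) (n : ℕ) :
    (cubicTangent α p e (n + 1)).1 * (cubicTangent α p e' (n + 1)).2 -
        (cubicTangent α p e' (n + 1)).1 * (cubicTangent α p e (n + 1)).2 =
      cubicJacobian α ((cubicMap α)^[n] p) *
        ((cubicTangent α p e n).1 * (cubicTangent α p e' n).2 -
          (cubicTangent α p e' n).1 * (cubicTangent α p e n).2) := by
  simp only [cubicTangent, cubicJacobian]
  ring

/-- Cauchy estimate for the derivatives of the iterates. -/
theorem norm_cubicTangent_le {α : ℂ} {p e : ℂ × ℂ} (he : ‖e‖ = 1) {n : ℕ} {R C : ℝ} (hR : 0 < R)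
    (hC : ∀ q, dist q p ≤ R → ‖(cubicMap α)^[n] q‖ ≤ C) : ‖cubicTangent α p e n‖ ≤ C / R := by
  rw [← (hasDerivAt_iterate_cubicMap α p e n).deriv]
  refine Complex.norm_deriv_le_of_forall_mem_sphere_norm_le hR ?_ fun z hz => hC _ ?_
  · refine Differentiable.diffContOnCl fun t => ?_
    exact (analyticAt_iterate_cubicMap α n _).differentiableAt.comp t (by fun_prop)
  · rw [mem_sphere_zero_iff_norm] at hz
    rw [dist_eq_norm, add_sub_cancel_left, norm_smul, he, hz, mul_one]

/-- The iterates cannot be uniformly `O(1 / n)` near a point whose orbit satisfies `n x_n → 1` and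
avoids the critical set: the determinant of the derivative would decay too slowly. -/
theorem false_of_uniform_decay {α : ℂ} {p : ℂ × ℂ} {R l : ℝ} {m : ℂ} (hR : 0 < R) {N : ℕ}
    (hC : ∀ q, dist q p ≤ R → ∀ n ≥ N, n * ‖(cubicMap α)^[n] q‖ ≤ l)
    (hJ : ∀ k, cubicJacobian α ((cubicMap α)^[k] p) ≠ 0)
    (hx : Tendsto (fun n : ℕ => n * ((cubicMap α)^[n] p).1) atTop (𝓝 1))
    (hy : Tendsto (fun n : ℕ => n * ((cubicMap α)^[n] p).2) atTop (𝓝 m))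
    (hp : Tendsto (fun n => (cubicMap α)^[n] p) atTop (𝓝 0)) : False := by
  obtain ⟨d, hd⟩ : ∃ d : ℕ → ℂ, ∀ n, d n =
      (cubicTangent α p (1, 0) n).1 * (cubicTangent α p (0, 1) n).2 -
        (cubicTangent α p (0, 1) n).1 * (cubicTangent α p (1, 0) n).2 := ⟨_, fun _ => rfl⟩
  have hrec : ∀ n, d (n + 1) = cubicJacobian α ((cubicMap α)^[n] p) * d n := fun n => by
    rw [hd, hd, det_cubicTangent]
  have hd0 : ∀ n, d n ≠ 0 := by
    intro n
    induction n with
    | zero => simp [hd, cubicTangent]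
    | succ n ih =>
      rw [hrec]
      exact mul_ne_zero (hJ n) ih
  have hx0 : Tendsto (fun n => ((cubicMap α)^[n] p).1) atTop (𝓝 0) := hp.fst_nhds
  have hy0 : Tendsto (fun n => ((cubicMap α)^[n] p).2) atTop (𝓝 0) := hp.snd_nhds
  have hJt : Tendsto (fun n : ℕ => n * (cubicJacobian α ((cubicMap α)^[n] p) - 1)) atTop
      (𝓝 (-1)) := by
    have h1 := (hx.neg.add (((hx.mul hx0).const_mul (3 * α)).mul (hx0.const_sub 1))).sub
      ((hy.mul hy0).const_mul 2)
    convert h1 using 2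
    · simp only [cubicJacobian]
      ring
    · ring
  have hJn : ∀ᶠ n : ℕ in atTop, n * ‖cubicJacobian α ((cubicMap α)^[n] p) - 1‖ ≤ 5 / 4 := by
    have h1 := hJt.norm
    rw [norm_neg, norm_one] at h1
    filter_upwards [h1.eventually_le_const (by norm_num : (1 : ℝ) < 5 / 4)] with n hn
    rwa [norm_mul, Complex.norm_natCast] at hn
  obtain ⟨M, hM⟩ := eventually_atTop.1 (hJn.and ((eventually_ge_atTop N).and
    (eventually_ge_atTop 8)))
  refine not_bounded_of_growth (D := fun n => (n : ℝ) ^ 2 * ‖d n‖) (c := 1 / 2)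
    (C := 2 * (l / R) ^ 2) (by norm_num) (N := M) ?_ ?_ ?_
  · have h1 : (8 : ℝ) ≤ M := by exact_mod_cast (hM M le_rfl).2.2
    have := norm_pos_iff.2 (hd0 M)
    positivity
  · intro n hn
    obtain ⟨h1, -, h2⟩ := hM n hn
    have h2' : (8 : ℝ) ≤ n := by exact_mod_cast h2
    have hn0 : (0 : ℝ) < n := by linarith
    have h3 : 1 - 5 / 4 / n ≤ ‖cubicJacobian α ((cubicMap α)^[n] p)‖ := by
      have h4 : ‖cubicJacobian α ((cubicMap α)^[n] p) - 1‖ ≤ 5 / 4 / n := by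
        rw [le_div_iff₀ hn0]
        linarith
      have h5 := norm_sub_norm_le (1 : ℂ) (1 - cubicJacobian α ((cubicMap α)^[n] p))
      rw [norm_one, sub_sub_cancel, norm_sub_rev] at h5
      linarith
    have h6 : (n : ℝ) ^ 2 * (1 + 1 / 2 / (n + 1)) ≤ ((n + 1 : ℕ) : ℝ) ^ 2 * (1 - 5 / 4 / n) := by
      have e1 : (n : ℝ) ^ 2 * (1 + 1 / 2 / (n + 1)) ≤ n ^ 2 + n / 2 := by
        have : (n : ℝ) ^ 2 / (n + 1) ≤ n := by
          rw [div_le_iff₀ (by linarith)]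
          nlinarith
        have e2 : (n : ℝ) ^ 2 * (1 + 1 / 2 / (n + 1)) = n ^ 2 + (n : ℝ) ^ 2 / (n + 1) / 2 := by
          ring
        linarith
      have e3 : ((n + 1 : ℕ) : ℝ) ^ 2 * (1 - 5 / 4 / n) =
          n ^ 2 + 3 / 4 * n - 3 / 2 - 5 / 4 / n := by
        push_cast
        field_simp
        ring
      have e4 : 5 / 4 / (n : ℝ) ≤ 5 / 4 / 8 := by gcongr
      linarith
    rw [hrec, norm_mul]
    calc (n : ℝ) ^ 2 * ‖d n‖ * (1 + 1 / 2 / (n + 1))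
        = (n : ℝ) ^ 2 * (1 + 1 / 2 / (n + 1)) * ‖d n‖ := by ring
      _ ≤ ((n + 1 : ℕ) : ℝ) ^ 2 * (1 - 5 / 4 / n) * ‖d n‖ := by gcongr
      _ ≤ ((n + 1 : ℕ) : ℝ) ^ 2 * ‖cubicJacobian α ((cubicMap α)^[n] p)‖ * ‖d n‖ := by gcongr
      _ = _ := by ring
  · intro n hn
    obtain ⟨-, h1, h2⟩ := hM n hn
    have h2' : (8 : ℝ) ≤ n := by exact_mod_cast h2
    have hn0 : (0 : ℝ) < n := by linarith
    have hb : ∀ e : ℂ × ℂ, ‖e‖ = 1 → ‖cubicTangent α p e n‖ ≤ l / n / R := fun e he =>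
      norm_cubicTangent_le he hR fun q hq => by
        rw [le_div_iff₀ hn0]
        linarith [hC q hq n h1]
    have hb1 := hb (1, 0) (by simp [Prod.norm_def])
    have hb2 := hb (0, 1) (by simp [Prod.norm_def])
    have h0 : 0 ≤ l / n / R := (norm_nonneg _).trans hb1
    have hdn : ‖d n‖ ≤ l / n / R * (l / n / R) + l / n / R * (l / n / R) := by
      rw [hd]
      refine (norm_sub_le _ _).trans ?_
      rw [norm_mul, norm_mul]
      exact add_le_add
        (mul_le_mul ((norm_fst_le _).trans hb1) ((norm_snd_le _).trans hb2) (norm_nonneg _) h0)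
        (mul_le_mul ((norm_fst_le _).trans hb2) ((norm_snd_le _).trans hb1) (norm_nonneg _) h0)
    calc (n : ℝ) ^ 2 * ‖d n‖
        ≤ (n : ℝ) ^ 2 * (l / n / R * (l / n / R) + l / n / R * (l / n / R)) := by gcongr
      _ = 2 * (l / R) ^ 2 := by
        field_simp
        ring

/-- Along an orbit with `y / x → u`, the increments of `1 / x` tend to `u²`. -/
theorem tendsto_inv_sub_inv {x y : ℕ → ℂ} {α u : ℂ} (hx : ∀ᶠ n in atTop, x n ≠ 0)
    (hx0 : Tendsto x atTop (𝓝 0)) (hu : Tendsto (fun n => y n / x n) atTop (𝓝 u))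
    (recx : ∀ n, x (n + 1) = x n - y n ^ 2 + α * x n ^ 3) :
    Tendsto (fun n => (x (n + 1))⁻¹ - (x n)⁻¹) atTop (𝓝 (u ^ 2)) := by
  have hq : Tendsto (fun n => 1 - (y n / x n) ^ 2 * x n + α * x n ^ 2) atTop (𝓝 1) := by
    have h1 := (((hu.pow 2).mul hx0).const_sub 1).add ((hx0.pow 2).const_mul α)
    convert h1 using 2
    simp
  have h2 := ((hu.pow 2).sub (hx0.const_mul α)).div hq one_ne_zero
  rw [mul_zero, sub_zero, div_one] at h2
  refine h2.congr' ?_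
  filter_upwards [hx, hq.eventually_ne one_ne_zero] with n h3 h4
  have h5 : x (n + 1) = x n * (1 - (y n / x n) ^ 2 * x n + α * x n ^ 2) := by
    rw [recx]
    field_simp
  rw [h5, Pi.div_apply]
  generalize y n / x n = U at *
  field_simp
  ring

/-- The limit of `y / x` along an orbit converging to the origin is characteristic. -/
theorem characteristic_of_tendsto {x y : ℕ → ℂ} {α u : ℂ} (hx : ∀ᶠ n in atTop, x n ≠ 0)
    (hx0 : Tendsto x atTop (𝓝 0)) (hu : Tendsto (fun n => y n / x n) atTop (𝓝 u))
    (recx : ∀ n, x (n + 1) = x n - y n ^ 2 + α * x n ^ 3)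
    (recy : ∀ n, y (n + 1) = y n - x n * y n) : u * (u ^ 2 - 1) = 0 := by
  by_contra hne
  have hq : Tendsto (fun n => 1 - (y n / x n) ^ 2 * x n + α * x n ^ 2) atTop (𝓝 1) := by
    have h1 := (((hu.pow 2).mul hx0).const_sub 1).add ((hx0.pow 2).const_mul α)
    convert h1 using 2
    simp
  refine not_tendsto_of_increments (t := fun n => (x n)⁻¹) (s := fun n => y n / x n) hne
    (tendsto_inv_sub_inv hx hx0 hu recx) ?_ hu
  have h2 := (hu.mul (((hu.pow 2).sub_const 1).sub (hx0.const_mul α))).div hq one_ne_zero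
  rw [mul_zero, sub_zero, div_one] at h2
  refine h2.congr' ?_
  filter_upwards [hx, hq.eventually_ne one_ne_zero] with n h3 h4
  have h5 : x (n + 1) = x n * (1 - (y n / x n) ^ 2 * x n + α * x n ^ 2) := by
    rw [recx]
    field_simp
  rw [h5, recy, Pi.div_apply]
  generalize hU : y n / x n = U at *
  have h6 : y n = U * x n := by rw [← hU]; field_simp
  rw [h6]
  field_simp
  ring

/-- No orbit converges to the origin along the direction `[0 : 1]`. -/
theorem not_tendsto_div_zero {x y : ℕ → ℂ} {α : ℂ} (hy : ∀ᶠ n in atTop, y n ≠ 0)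
    (hx0 : Tendsto x atTop (𝓝 0))
    (recx : ∀ n, x (n + 1) = x n - y n ^ 2 + α * x n ^ 3)
    (recy : ∀ n, y (n + 1) = y n - x n * y n) :
    ¬ Tendsto (fun n => x n / y n) atTop (𝓝 0) := by
  intro hz
  have hq : Tendsto (fun n => 1 - x n) atTop (𝓝 1) := by simpa using hx0.const_sub 1
  have ht : Tendsto (fun n => (y (n + 1))⁻¹ - (y n)⁻¹) atTop (𝓝 0) := by
    have h2 := hz.div hq one_ne_zero
    rw [zero_div] at h2
    refine h2.congr' ?_
    filter_upwards [hy, hq.eventually_ne one_ne_zero] with n h3 h4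
    have h5 : y (n + 1) = y n * (1 - x n) := by rw [recy]; ring
    rw [h5, Pi.div_apply]
    field_simp
    ring
  refine not_tendsto_of_increments (t := fun n => (y n)⁻¹) (s := fun n => x n / y n) (b := -1)
    (by norm_num) ht ?_ hz
  have h2 := (((((hz.pow 2).mul hx0).const_mul α).add (hz.pow 2)).sub_const 1).div hq one_ne_zero
  have h3 : ((α * (0 ^ 2 * 0) + 0 ^ 2 - 1) / 1 : ℂ) = -1 := by norm_num
  rw [h3] at h2
  refine h2.congr' ?_
  filter_upwards [hy, hq.eventually_ne one_ne_zero] with n h3 h4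
  have h5 : y (n + 1) = y n * (1 - x n) := by rw [recy]; ring
  rw [h5, recx, Pi.div_apply]
  field_simp
  ring

/-- `cubicMap α` has no open set of points converging to the origin along a direction `[1 : u]`
with `u² = 1`. -/
theorem false_of_nondegenerate {α u : ℂ} (hu : u ^ 2 = 1) {Ω : Set (ℂ × ℂ)} (hΩ : IsOpen Ω)
    (hΩne : Ω.Nonempty)
    (h0 : ∀ p ∈ Ω, Tendsto (fun n => (cubicMap α)^[n] p) atTop (𝓝 0))
    (hx : ∀ p ∈ Ω, ∀ᶠ n in atTop, ((cubicMap α)^[n] p).1 ≠ 0)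
    (hd : ∀ p ∈ Ω, Tendsto (fun n => ((cubicMap α)^[n] p).2 / ((cubicMap α)^[n] p).1) atTop
      (𝓝 u)) : False := by
  have hcont : ∀ n, Continuous ((cubicMap α)^[n]) := fun n =>
    continuous_iff_continuousAt.2 fun p => (analyticAt_iterate_cubicMap α n p).continuousAt
  have hnx : ∀ p ∈ Ω, Tendsto (fun n : ℕ => n * ((cubicMap α)^[n] p).1) atTop (𝓝 1) := by
    intro p hp
    have h1 := tendsto_inv_sub_inv (α := α) (x := fun n => ((cubicMap α)^[n] p).1)
      (y := fun n => ((cubicMap α)^[n] p).2) (hx p hp) (h0 p hp).fst_nhds (hd p hp)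
      fun n => by rw [Function.iterate_succ_apply']; rfl
    have h2 := (tendsto_div_nat_of_tendsto_sub
      (d := fun n => (((cubicMap α)^[n] p).1)⁻¹) h1).inv₀ (by rw [hu]; exact one_ne_zero)
    rw [hu, inv_one] at h2
    exact h2.congr fun n => by rw [inv_div, div_inv_eq_mul]
  have hny : ∀ p ∈ Ω, Tendsto (fun n : ℕ => n * ((cubicMap α)^[n] p).2) atTop (𝓝 u) := by
    intro p hp
    have h1 := (hnx p hp).mul (hd p hp)
    rw [one_mul] at h1
    refine h1.congr' ?_
    filter_upwards [hx p hp] with n hn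
    field_simp
  have hu1 : ‖u‖ = 1 := by
    have h1 : ‖u‖ ^ 2 = 1 := by rw [← norm_pow, hu, norm_one]
    exact (pow_eq_one_iff_of_nonneg (norm_nonneg u) two_ne_zero).1 h1
  obtain ⟨C, hC⟩ : ∃ C : ℕ → Set (ℂ × ℂ), ∀ N, C N =
      {p | ∀ n ≥ N, n * ‖(cubicMap α)^[n] p‖ ≤ 2} ∪ Ωᶜ := ⟨_, fun _ => rfl⟩
  have hdense : Dense (⋃ N, interior (C N)) := by
    refine dense_iUnion_interior_of_closed (fun N => ?_) ?_
    · rw [hC]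
      refine IsClosed.union ?_ hΩ.isClosed_compl
      simp only [Set.ofPred_forall]
      exact isClosed_iInter fun n => isClosed_iInter fun _ =>
        isClosed_le (continuous_const.mul (hcont n).norm) continuous_const
    · refine Set.eq_univ_of_forall fun p => Set.mem_iUnion.2 ?_
      by_cases hp : p ∈ Ω
      · have h1 := (hnx p hp).norm.eventually_le_const (by norm_num : ‖(1 : ℂ)‖ < 2)
        have h2 := (hny p hp).norm.eventually_le_const (by rw [hu1]; norm_num : ‖u‖ < 2)
        obtain ⟨N, hN⟩ := eventually_atTop.1 (h1.and h2)
        refine ⟨N, ?_⟩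
        rw [hC]
        refine Or.inl fun n hn => ?_
        obtain ⟨h3, h4⟩ := hN n hn
        rw [norm_mul, Complex.norm_natCast] at h3 h4
        rw [Prod.norm_def, mul_max_of_nonneg _ _ n.cast_nonneg]
        exact max_le h3 h4
      · exact ⟨0, by rw [hC]; exact Or.inr hp⟩
  obtain ⟨q, hqΩ, hq⟩ := hdense.inter_open_nonempty Ω hΩ hΩne
  obtain ⟨N, hqN⟩ := Set.mem_iUnion.1 hq
  have hV : IsOpen (Ω ∩ interior (C N)) := hΩ.inter isOpen_interior
  obtain ⟨p, hpV, hpJ⟩ := exists_mem_forall_ne_zero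
    (F := fun k p => cubicJacobian α ((cubicMap α)^[k] p)) (fun k p _ => by
      have h1 : AnalyticAt ℂ (fun p => ((cubicMap α)^[k] p).1) p :=
        analyticAt_fst.comp (analyticAt_iterate_cubicMap α k p)
      have h2 : AnalyticAt ℂ (fun p => ((cubicMap α)^[k] p).2) p :=
        analyticAt_snd.comp (analyticAt_iterate_cubicMap α k p)
      unfold cubicJacobian
      fun_prop)
    (fun k => ⟨0, by simp [iterate_cubicMap_zero, cubicJacobian]⟩) hV ⟨q, hqΩ, hqN⟩
  obtain ⟨R, hR, hball⟩ := Metric.nhds_basis_closedBall.mem_iff.1 (hV.mem_nhds hpV)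
  refine false_of_uniform_decay (N := N) (l := 2) hR (fun z hz n hn => ?_) hpJ (hnx p hpV.1)
    (hny p hpV.1) (h0 p hpV.1)
  have h1 := hball (Metric.mem_closedBall.2 hz)
  have h2 := interior_subset h1.2
  rw [hC] at h2
  exact h2.resolve_right (fun h => h h1.1) n hn

/-- A nonempty open set contains a point whose orbit never meets the line `y = 0`. -/
theorem exists_mem_forall_snd_ne_zero (α : ℂ) {Ω : Set (ℂ × ℂ)} (hΩ : IsOpen Ω)
    (hΩne : Ω.Nonempty) : ∃ p ∈ Ω, ∀ n, ((cubicMap α)^[n] p).2 ≠ 0 := by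
  obtain ⟨p, hp, h1⟩ := exists_mem_forall_ne_zero
    (F := fun k p => p.2 * (1 - ((cubicMap α)^[k] p).1)) (fun k p _ => by
      have h1 : AnalyticAt ℂ (fun p => ((cubicMap α)^[k] p).1) p :=
        analyticAt_fst.comp (analyticAt_iterate_cubicMap α k p)
      exact analyticAt_snd.mul (analyticAt_const.sub h1))
    (fun k => by
      by_contra! hne
      have hcont : Continuous fun t : ℂ => 1 - ((cubicMap α)^[k] (0, t)).1 := by
        have h1 : Continuous ((cubicMap α)^[k]) := continuous_iff_continuousAt.2 fun p =>
          (analyticAt_iterate_cubicMap α k p).continuousAt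
        fun_prop
      have h1 : ∀ᶠ t in 𝓝[≠] (0 : ℂ), 1 - ((cubicMap α)^[k] (0, t)).1 ≠ 0 := by
        refine (hcont.tendsto 0).mono_left nhdsWithin_le_nhds |>.eventually_ne ?_
        have : (cubicMap α)^[k] (0, 0) = 0 := iterate_cubicMap_zero α k
        simp [this]
      obtain ⟨t, ht, ht0⟩ := (h1.and self_mem_nhdsWithin).exists
      exact (mul_ne_zero ht0 ht) (hne (0, t))) hΩ hΩne
  refine ⟨p, hp, fun n => ?_⟩
  induction n with
  | zero => exact left_ne_zero_of_mul (h1 0)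
  | succ n ih =>
    have h2 : ((cubicMap α)^[n + 1] p).2 =
        ((cubicMap α)^[n] p).2 * (1 - ((cubicMap α)^[n] p).1) := by
      rw [Function.iterate_succ_apply', cubicMap]
      ring
    rw [h2]
    exact mul_ne_zero ih (right_ne_zero_of_mul (h1 n))

/-- For `h(x,y) = (x - y² + a x³, y - xy)` with real `a > 0`, there is no domain of attraction
to the origin along any direction `[v] ∈ ℙ¹(ℂ)`.  Convergence of the projective classes
`[hⁿ(p)] → [v]` is expressed by the existence of nonzero scalars `c n` with
`c n • hⁿ(p) → v`. -/
theorem h_no_domain_of_attraction_along_any_direction (a : ℝ) (ha : 0 < a)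
    (h : ℂ × ℂ → ℂ × ℂ)
    (hh : h = fun q : ℂ × ℂ => (q.1 - q.2 ^ 2 + (a : ℂ) * q.1 ^ 3, q.2 - q.1 * q.2)) :
    ∀ v : ℂ × ℂ, v ≠ 0 →
      ¬ ∃ Ω : Set (ℂ × ℂ), Ω.Nonempty ∧ IsOpen Ω ∧
        ∀ p ∈ Ω,
          Tendsto (fun n => h^[n] p) atTop (𝓝 (0, 0)) ∧
          (∀ᶠ n in atTop, h^[n] p ≠ (0, 0)) ∧
          ∃ c : ℕ → ℂ, (∀ n, c n ≠ 0) ∧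
            Tendsto (fun n => c n • h^[n] p) atTop (𝓝 v) := by
  rintro v hv ⟨Ω, hΩne, hΩ, hall⟩
  obtain rfl : h = cubicMap a := hh
  have recx : ∀ p n, ((cubicMap a)^[n + 1] p).1 = ((cubicMap a)^[n] p).1 -
      ((cubicMap a)^[n] p).2 ^ 2 + a * ((cubicMap a)^[n] p).1 ^ 3 := fun p n => by
    rw [Function.iterate_succ_apply']; rfl
  have recy : ∀ p n, ((cubicMap a)^[n + 1] p).2 = ((cubicMap a)^[n] p).2 -
      ((cubicMap a)^[n] p).1 * ((cubicMap a)^[n] p).2 := fun p n => by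
    rw [Function.iterate_succ_apply']; rfl
  have h0 : ∀ p ∈ Ω, Tendsto (fun n => (cubicMap a)^[n] p) atTop (𝓝 0) := fun p hp => (hall p hp).1
  by_cases hv1 : v.1 = 0
  · have hv2 : v.2 ≠ 0 := fun hv2 => hv (Prod.ext hv1 hv2)
    obtain ⟨p, hp⟩ := hΩne
    obtain ⟨-, -, c, hc, hcv⟩ := hall p hp
    have hy := hcv.snd_nhds.eventually_ne hv2
    refine not_tendsto_div_zero (hy.mono fun n hn => right_ne_zero_of_mul hn)
      (h0 p hp).fst_nhds (recx p) (recy p) ?_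
    have h1 := hcv.fst_nhds.div hcv.snd_nhds hv2
    rw [hv1, zero_div] at h1
    exact h1.congr fun n => mul_div_mul_left _ _ (hc n)
  · have hx : ∀ p ∈ Ω, ∀ᶠ n in atTop, ((cubicMap a)^[n] p).1 ≠ 0 := fun p hp => by
      obtain ⟨-, -, c, hc, hcv⟩ := hall p hp
      exact (hcv.fst_nhds.eventually_ne hv1).mono fun n hn => right_ne_zero_of_mul hn
    have hd : ∀ p ∈ Ω, Tendsto (fun n => ((cubicMap a)^[n] p).2 / ((cubicMap a)^[n] p).1) atTop
        (𝓝 (v.2 / v.1)) := fun p hp => by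
      obtain ⟨-, -, c, hc, hcv⟩ := hall p hp
      exact (hcv.snd_nhds.div hcv.fst_nhds hv1).congr fun n => mul_div_mul_left _ _ (hc n)
    have hchar : v.2 / v.1 * ((v.2 / v.1) ^ 2 - 1) = 0 := by
      obtain ⟨p, hp⟩ := hΩne
      exact characteristic_of_tendsto (hx p hp) (h0 p hp).fst_nhds (hd p hp) (recx p) (recy p)
    rcases mul_eq_zero.1 hchar with hu | hu
    · rw [hu] at hd
      obtain ⟨p, hp, hy⟩ := exists_mem_forall_snd_ne_zero a hΩ hΩne
      obtain ⟨N, hN⟩ := eventually_atTop.1 (hx p hp)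
      have hN' : ∀ n, ((cubicMap a)^[n + N] p).1 ≠ 0 := fun n => hN _ (Nat.le_add_left _ _)
      refine false_of_degenerate (X := fun n => ((cubicMap a)^[n + N] p).1)
        (U := fun n => ((cubicMap a)^[n + N] p).2 / ((cubicMap a)^[n + N] p).1) ha
        hN' (fun n => div_ne_zero (hy _) (hN' n))
        ((h0 p hp).fst_nhds.comp (tendsto_add_atTop_nat N))
        ((hd p hp).comp (tendsto_add_atTop_nat N)) (fun n => ?_) fun n => ?_
      · have h1 := hN' n
        rw [Nat.add_right_comm, recx]
        field_simp
      · rw [div_mul_cancel₀ _ (hN' _), div_mul_cancel₀ _ (hN' _), Nat.add_right_comm, recy]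
        ring
    · exact false_of_nondegenerate (sub_eq_zero.1 hu) hΩ hΩne h0 hx hd
end
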